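/- Let A_{N,1}, …, A_{N,L} be independent families of N×N random matrices that are uniformly bounded in operator norm, each of which is permutation invariant. Fix n ≥ 2 and ℓ_1, …, ℓ_n ∈ {1,…,L} with ℓ_i ≠ ℓ_{i+1} for 1 ≤ i ≤ n−1. For each N and each i ∈ {1,…,n}, let P_{N,i} = D_{N,0,i} X_{k_{N,i}(1)} D_{N,1,i} ⋯ X_{k_{N,i}(d_{N,i})} D_{N,d_{N,i},i} be a monomial in noncommuting indeterminates (X_k)_{k∈K} whose coefficients D_{N,j,i} are deterministic N×N diagonal matrices, and assume there are constants d and C′ such that d_{N,i} ≤ d and ‖D_{N,j,i}‖ ≤ C′ for all N, i, j. Set M_{N,i} = P_{N,i}(A_{N,ℓ_i}) (substitute A_{N,ℓ_i}^{(k)} for X_k) and ε_N = Δ[(M_{N,1} − ΔM_{N,1})(M_{N,2} − ΔM_{N,2}) ⋯ (M_{N,n} − ΔM_{N,n})]. Then for every integer p ≥ 1, E[(1/N) Tr((ε_N ε_N*)^p)] → 0 as N → ∞. -/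

import Mathlib

open MeasureTheory ProbabilityTheory Filter Matrix Asymptotics
open scoped BigOperators ENNReal
open scoped Classical

noncomputable section

/-- The diagonal projection `Δ` on `N × N` complex matrices. -/
def dproj {N : ℕ} (A : Matrix (Fin N) (Fin N) ℂ) : Matrix (Fin N) (Fin N) ℂ :=
  Matrix.of fun i j => if i = j then A i j else 0

/-- The operator norm of a matrix acting on `ℓ²({1,…,N})`. -/
def matOpNorm {N : ℕ} (A : Matrix (Fin N) (Fin N) ℂ) : ℝ :=
  ‖Matrix.toEuclideanCLM (𝕜 := ℂ) A‖

/-! ### Multigraph combinatorics -/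

section Graph

variable {V E : Type} (src tgt : E → V)

/-- Adjacency through an edge avoiding a forbidden set `F` of edges
(direction is ignored). -/
def adjOn (F : Set E) (a b : V) : Prop :=
  ∃ e, e ∉ F ∧ ((src e = a ∧ tgt e = b) ∨ (src e = b ∧ tgt e = a))

/-- Reachability in the graph, using only edges outside `F`. -/
def reachOn (F : Set E) : V → V → Prop :=
  Relation.ReflTransGen (adjOn src tgt F)

lemma adjOn_symm (F : Set E) : Symmetric (adjOn src tgt F) := by
  rintro a b ⟨e, he, h⟩
  exact ⟨e, he, h.symm⟩

/-- The setoid of connectivity using edges outside `F`. -/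
def connSetoid (F : Set E) : Setoid V :=
  ⟨reachOn src tgt F,
    ⟨fun _ => Relation.ReflTransGen.refl,
     fun h => (@Relation.ReflTransGen.symmetric _ _ ⟨fun _ _ h => adjOn_symm src tgt F h⟩).symm _ _ h,
     fun h h' => Relation.ReflTransGen.trans h h'⟩⟩

/-- Number of connected components of the graph with the edges in `F` deleted. -/
def ncompAvoiding (F : Set E) : ℕ :=
  Nat.card (Quotient (connSetoid src tgt F))

/-- Number of connected components. -/
def ncomp : ℕ := ncompAvoiding src tgt ∅

/-- The graph is connected. -/
def IsConnectedGraph : Prop := ∀ a b : V, reachOn src tgt ∅ a b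

/-- A cut edge (bridge): deleting it disconnects its endpoints. -/
def IsCutEdge (e : E) : Prop := ¬ reachOn src tgt {e} (src e) (tgt e)

/-- The set of cut edges. -/
def cutEdges : Set E := {e | IsCutEdge src tgt e}

/-- The setoid whose classes are the two-edge connected components
(connected components after deleting all cut edges). -/
def teccSetoid : Setoid V := connSetoid src tgt (cutEdges src tgt)

/-- Degree, in the forest of two-edge connected components, of a
two-edge connected component: the number of cut edges incident to it. -/
def teccDeg (c : Quotient (teccSetoid src tgt)) : ℕ :=
  Nat.card {e : E // IsCutEdge src tgt e ∧
    (Quotient.mk (teccSetoid src tgt) (src e) = c ∨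
      Quotient.mk (teccSetoid src tgt) (tgt e) = c)}

/-- `𝔣(G)`: the number of leaves of the forest of two-edge connected components,
single-vertex trees of the forest counting twice. -/
def frak : ℕ :=
  Nat.card {c : Quotient (teccSetoid src tgt) // teccDeg src tgt c = 1} +
    2 * Nat.card {c : Quotient (teccSetoid src tgt) // teccDeg src tgt c = 0}

end Graph

/-! ### Graph monomials -/

/-- A graph monomial: a finite directed multigraph with two roots and edges
labelled by a family index in `Fin L` and an index in `K`.  (Connectedness is
required separately via `IsConnectedGraph`.) -/
structure GraphMonomial (L : ℕ) (K : Type) where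
  V : Type
  E : Type
  fintV : Fintype V
  fintE : Fintype E
  src : E → V
  tgt : E → V
  vin : V
  vout : V
  labL : E → Fin L
  labK : E → K

attribute [instance] GraphMonomial.fintV GraphMonomial.fintE

namespace GraphMonomial

variable {L : ℕ} {K : Type} (g : GraphMonomial L K)

/-- Evaluation of a graph monomial in a collection of matrices. -/
def eval {N : ℕ} (A : Fin L → K → Matrix (Fin N) (Fin N) ℂ) :
    Matrix (Fin N) (Fin N) ℂ :=
  Matrix.of fun i j => ∑ φ : g.V → Fin N,
    if φ g.vin = j ∧ φ g.vout = i then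
      ∏ e : g.E, A (g.labL e) (g.labK e) (φ (g.tgt e)) (φ (g.src e))
    else 0

/-- The starting vertex of a step `(e, b)`: `e` traversed forward if `b = true`,
backward otherwise. -/
def stepSrc (s : g.E × Bool) : g.V := if s.2 then g.src s.1 else g.tgt s.1

/-- The ending vertex of a step. -/
def stepTgt (s : g.E × Bool) : g.V := if s.2 then g.tgt s.1 else g.src s.1

/-- A simple cycle of the underlying undirected multigraph: a nonempty cyclic
sequence of steps with pairwise distinct edges and pairwise distinct vertices. -/
def IsSimpleCycle (c : List (g.E × Bool)) : Prop :=
  ∃ h : c ≠ [],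
    (∀ i : Fin c.length,
      g.stepTgt (c.get i) =
        g.stepSrc (c.get ⟨((i : ℕ) + 1) % c.length,
          Nat.mod_lt _ (List.length_pos_iff.mpr h)⟩)) ∧
    (c.map Prod.fst).Nodup ∧ (c.map g.stepSrc).Nodup

/-- A cycle is directed when it traverses all its edges consistently with
their orientations (one way or the other). -/
def IsDirectedCycleList (c : List (g.E × Bool)) : Prop :=
  (∀ s ∈ c, s.2 = true) ∨ (∀ s ∈ c, s.2 = false)

/-- `S` is the edge set of some simple cycle. -/
def IsCycleEdgeSet (S : Finset g.E) : Prop :=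
  ∃ c, g.IsSimpleCycle c ∧ (c.map Prod.fst).toFinset = S

/-- The underlying graph is an oriented cactus: it is connected, every simple
cycle is directed, and every edge belongs to exactly one simple cycle. -/
def IsOrientedCactus : Prop :=
  IsConnectedGraph g.src g.tgt ∧
  (∀ c, g.IsSimpleCycle c → g.IsDirectedCycleList c) ∧
  (∀ e : g.E, ∃! S : Finset g.E, g.IsCycleEdgeSet S ∧ e ∈ S)

/-- A cactus-type monomial: an oriented cactus whose input and output coincide. -/
def IsCactusType : Prop := g.vin = g.vout ∧ g.IsOrientedCactus

/-- A member of `ℱ`: a directed simple path (oriented from the input, at the far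
right, to the output, at the far left) with oriented cacti attached to the
vertices of the path (the root of each cactus being a path vertex). -/
def IsPathCactusType : Prop :=
  IsConnectedGraph g.src g.tgt ∧
  ∃ (d : ℕ) (v : Fin (d + 1) → g.V) (f : Fin d → g.E),
    Function.Injective v ∧ Function.Injective f ∧
    (∀ j : Fin d, g.src (f j) = v j.succ ∧ g.tgt (f j) = v j.castSucc) ∧
    g.vin = v (Fin.last d) ∧ g.vout = v 0 ∧
    (∀ c, g.IsSimpleCycle c → g.IsDirectedCycleList c ∧ ∀ s ∈ c, s.1 ∉ Set.range f) ∧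
    (∀ e : g.E, e ∉ Set.range f →
      ∃! S : Finset g.E, g.IsCycleEdgeSet S ∧ e ∈ S) ∧
    (∀ w : g.V, ∃! j : Fin (d + 1), reachOn g.src g.tgt (Set.range f) w (v j))

end GraphMonomial
/-! ### Random matrices, expectations, test graphs -/

/-- The entries of the random matrix `X` are measurable. -/
def EntriesMeasurable {N : ℕ} {Ω : Type} [MeasurableSpace Ω]
    (X : Ω → Matrix (Fin N) (Fin N) ℂ) : Prop :=
  ∀ i j, Measurable fun ω => X ω i j

/-- The entries of the random matrix `X` are essentially bounded. -/
def EntriesBounded {N : ℕ} {Ω : Type} [MeasurableSpace Ω] (μ : Measure Ω)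
    (X : Ω → Matrix (Fin N) (Fin N) ℂ) : Prop :=
  ∃ C : ℝ, ∀ᵐ ω ∂μ, ∀ i j, ‖X ω i j‖ ≤ C

/-- The σ-algebra generated by the entries of the matrices of a family. -/
def famSigma {N : ℕ} {Ω K : Type} [MeasurableSpace Ω]
    (A : K → Ω → Matrix (Fin N) (Fin N) ℂ) : MeasurableSpace Ω :=
  ⨆ k : K, ⨆ i : Fin N, ⨆ j : Fin N,
    MeasurableSpace.comap (fun ω => A k ω i j) inferInstance

/-- Permutation invariance of a family of `N × N` random matrices. -/
def PermInvariant {N : ℕ} {Ω K : Type} [MeasurableSpace Ω] (μ : Measure Ω)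
    (A : K → Ω → Matrix (Fin N) (Fin N) ℂ) : Prop :=
  ∀ σ : Equiv.Perm (Fin N),
    Measure.map (fun ω => fun (k : K) (i j : Fin N) => A k ω (σ i) (σ j)) μ =
      Measure.map (fun ω => fun (k : K) (i j : Fin N) => A k ω i j) μ

/-- A test graph with matrix-valued edge labels. -/
structure TestGraph (N : ℕ) (Ω : Type) where
  V : Type
  E : Type
  fintV : Fintype V
  fintE : Fintype E
  src : E → V
  tgt : E → V
  lab : E → Ω → Matrix (Fin N) (Fin N) ℂ

attribute [instance] TestGraph.fintV TestGraph.fintE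

namespace TestGraph

variable {N : ℕ} {Ω : Type} [MeasurableSpace Ω]

/-- Number of connected components `c(T)` of a test graph. -/
def ncc (T : TestGraph N Ω) : ℕ := ncomp T.src T.tgt

/-- The (unnormalized) trace observable of a test graph. -/
def tauInner (T : TestGraph N Ω) (ω : Ω) : ℂ :=
  ∑ φ : T.V → Fin N, ∏ e : T.E, T.lab e ω (φ (T.tgt e)) (φ (T.src e))

/-- The (unnormalized) injective trace observable of a test graph. -/
def tau0Inner (T : TestGraph N Ω) (ω : Ω) : ℂ :=
  ∑ φ : T.V → Fin N,
    if Function.Injective φ then ∏ e : T.E, T.lab e ω (φ (T.tgt e)) (φ (T.src e)) else 0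

/-- `τ_N[T]`. -/
def tau (T : TestGraph N Ω) (μ : Measure Ω) : ℂ :=
  ((N : ℂ) ^ T.ncc)⁻¹ * ∫ ω, T.tauInner ω ∂μ

/-- `τ⁰_N[T]`. -/
def tau0 (T : TestGraph N Ω) (μ : Measure Ω) : ℂ :=
  ((N : ℂ) ^ T.ncc)⁻¹ * ∫ ω, T.tau0Inner ω ∂μ

/-- The quotient test graph `T^π` associated with a partition `π` of the
vertices of `T`. -/
def quot (T : TestGraph N Ω) (π : Setoid T.V) : TestGraph N Ω where
  V := Quotient π
  E := T.E
  fintV := @Quotient.fintype _ T.fintV π fun _ _ => Classical.propDecidable _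
  fintE := T.fintE
  src := fun e => Quotient.mk π (T.src e)
  tgt := fun e => Quotient.mk π (T.tgt e)
  lab := T.lab

end TestGraph

/-- Monomial `D₀ X_{k(1)} D₁ ⋯ X_{k(d)} D_d` evaluated in a family of matrices:
the coefficients are given as an arbitrary function `D : ℕ → Matrix`. -/
def monomialEval {K : Type} {N : ℕ} (A : K → Matrix (Fin N) (Fin N) ℂ)
    (dd : ℕ) (kk : ℕ → K) (D : ℕ → Matrix (Fin N) (Fin N) ℂ) :
    Matrix (Fin N) (Fin N) ℂ :=
  D 0 * (List.ofFn fun j : Fin dd => A (kk ((j : ℕ) + 1)) * D ((j : ℕ) + 1)).prod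

/-- The centered product `(M₁ - ΔM₁)(M₂ - ΔM₂)⋯(Mₙ - ΔMₙ)`. -/
def centeredProd {N n : ℕ} (M : Fin n → Matrix (Fin N) (Fin N) ℂ) :
    Matrix (Fin N) (Fin N) ℂ :=
  (List.ofFn fun i : Fin n => M i - dproj (M i)).prod

/-- Mutual independence of the families `A 1, …, A L` of random matrices. -/
def IndepFamilies {Ω K : Type} {L : ℕ} [MeasurableSpace Ω] (μ : Measure Ω)
    (A : (N : ℕ) → Fin L → K → Ω → Matrix (Fin N) (Fin N) ℂ) : Prop :=
  ∀ N : ℕ, ProbabilityTheory.iIndep (fun ℓ : Fin L => famSigma (A N ℓ)) μ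

/-- Uniform boundedness, in operator norm, of families of random matrices. -/
def UnifOpNormBound {Ω K : Type} {L : ℕ} [MeasurableSpace Ω] (μ : Measure Ω)
    (A : (N : ℕ) → Fin L → K → Ω → Matrix (Fin N) (Fin N) ℂ) : Prop :=
  ∃ C : ℝ, ∀ (N : ℕ) (ℓ : Fin L) (k : K), ∀ᵐ ω ∂μ, matOpNorm (A N ℓ k ω) ≤ C

/-- The growth bound (MS) for the family `A · ℓ`:
for all graph monomials `g₁, …, gₘ` labelled in the single family `ℓ` and having
equal input and output, `E[∏ᵢ Tr gᵢ(A_N)] = O(N^{Σᵢ 𝔣(gᵢ)/2})` as `N → ∞`. -/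
def MSBound {Ω K : Type} {L : ℕ} [MeasurableSpace Ω] (μ : Measure Ω)
    (A : (N : ℕ) → Fin L → K → Ω → Matrix (Fin N) (Fin N) ℂ) (ℓ : Fin L) : Prop :=
  ∀ (m : ℕ), 1 ≤ m → ∀ gs : Fin m → GraphMonomial L K,
    (∀ i : Fin m, IsConnectedGraph (gs i).src (gs i).tgt ∧
      (∀ e, (gs i).labL e = ℓ) ∧ (gs i).vin = (gs i).vout) →
    (fun N : ℕ => ∫ ω, ∏ i : Fin m,
        Matrix.trace ((gs i).eval fun ℓ' k => A N ℓ' k ω) ∂μ)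
      =O[atTop] fun N : ℕ => (N : ℝ) ^ ((∑ i : Fin m, (frak (gs i).src (gs i).tgt : ℝ)) / 2)

/-!
Let `ε` be the diagonal of the centered product. Since `ε` is diagonal and bounded in operator norm,
the trace of `(ε ε*) ^ p` is at most a constant times that of `ε ε*`, so it suffices to bound
`E[Tr (ε ε*)]` independently of `N`.

Up to bounded weights, this is a sum over closed walks `f` of a fixed length of the expectation
`I f` of the product of the matrix entries along `f`. There are about `N ^ v` walks visiting `v`
distinct vertices in a given pattern, so it suffices that `I f = O(N ^ (-v))`. By independence and
permutation invariance, `I f` does not change if the vertices are relabelled, separately for each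
family. A vertex where the walk changes from one family to another can thus be split in two, which
gives a pattern with `v + 1` vertices, and `I f` is `O(N ^ (-v - 1))` times the sum of the
corresponding products over all labellings with this pattern. It remains to bound that sum by
`O(N)`. Coincidences between labels are imposed by averaging over random signs, at bounded cost.
What is left is a product of contractions broken at the two halves of the split vertex and at one
further vertex. The sum over these three special vertices is at most `N`: the contractions at both
ends of the walk meet in the further vertex, and all other factors act as Schur multipliers.

The argument requires the further vertex to be visited twice, with no break before the first visit
and after the last. Centering makes the endpoints of consecutive factors distinct, so a shortest
return `f (a * d) = f (b * d)` to an endpoint provides both vertices: the one to be split is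
`f ((a + 1) * d)`, and the further one is `f (a * d)`.
-/

section OperatorNorm

open scoped Matrix.Norms.L2Operator

variable {𝕜 m n ι : Type*} [RCLike 𝕜] [Fintype m] [Fintype n] [Fintype ι]

lemma norm_toLp_star (u : n → 𝕜) : ‖WithLp.toLp 2 (star u)‖ = ‖WithLp.toLp 2 u‖ := by
  simp only [EuclideanSpace.norm_eq, Pi.star_apply, norm_star]

lemma norm_dotProduct_le (u v : n → 𝕜) :
    ‖u ⬝ᵥ v‖ ≤ ‖WithLp.toLp 2 u‖ * ‖WithLp.toLp 2 v‖ := by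
  have h := norm_inner_le_norm (𝕜 := 𝕜) (WithLp.toLp 2 (star v)) (WithLp.toLp 2 u)
  rwa [EuclideanSpace.inner_toLp_toLp, star_star, norm_toLp_star, mul_comm] at h

lemma norm_dotProduct_mulVec_le [DecidableEq n] (A : Matrix m n 𝕜) (u : m → 𝕜) (v : n → 𝕜) :
    ‖u ⬝ᵥ A *ᵥ v‖ ≤ ‖A‖ * (‖WithLp.toLp 2 u‖ * ‖WithLp.toLp 2 v‖) :=
  calc ‖u ⬝ᵥ A *ᵥ v‖ ≤ ‖WithLp.toLp 2 u‖ * ‖WithLp.toLp 2 (A *ᵥ v)‖ := norm_dotProduct_le _ _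
    _ ≤ ‖WithLp.toLp 2 u‖ * (‖A‖ * ‖WithLp.toLp 2 v‖) := by
        gcongr
        exact l2_opNorm_mulVec A (WithLp.toLp 2 v)
    _ = ‖A‖ * (‖WithLp.toLp 2 u‖ * ‖WithLp.toLp 2 v‖) := by ring

lemma l2_opNorm_le_of_norm_dotProduct_mulVec_le [DecidableEq n] {A : Matrix m n 𝕜} {C : ℝ}
    (hC : 0 ≤ C)
    (h : ∀ u v, ‖u ⬝ᵥ A *ᵥ v‖ ≤ C * (‖WithLp.toLp 2 u‖ * ‖WithLp.toLp 2 v‖)) : ‖A‖ ≤ C := by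
  refine ContinuousLinearMap.opNorm_le_bound _ hC fun v => ?_
  set w : EuclideanSpace 𝕜 m := WithLp.toLp 2 (A *ᵥ v.ofLp)
  have hw : ‖star w.ofLp ⬝ᵥ w.ofLp‖ = ‖w‖ * ‖w‖ := by
    rw [dotProduct_comm, ← EuclideanSpace.inner_eq_star_dotProduct,
      ← inner_self_re_eq_norm (𝕜 := 𝕜), inner_self_eq_norm_mul_norm]
  have hle : ‖w‖ * ‖w‖ ≤ ‖w‖ * (C * ‖v‖) := by
    have := h (star w.ofLp) v.ofLp
    rw [norm_toLp_star] at this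
    linarith
  rcases (norm_nonneg w).eq_or_lt with h0 | hpos
  · exact h0.symm.trans_le (by positivity)
  · exact le_of_mul_le_mul_left hle hpos

lemma l2_opNorm_transpose_le [DecidableEq m] [DecidableEq n] (A : Matrix m n 𝕜) :
    ‖Aᵀ‖ ≤ ‖A‖ := by
  refine l2_opNorm_le_of_norm_dotProduct_mulVec_le (norm_nonneg _) fun u v => ?_
  rw [dotProduct_mulVec, vecMul_transpose, dotProduct_comm, mul_comm ‖WithLp.toLp 2 u‖]
  exact norm_dotProduct_mulVec_le A v u

lemma l2_opNorm_transpose [DecidableEq m] [DecidableEq n] (A : Matrix m n 𝕜) : ‖Aᵀ‖ = ‖A‖ :=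
  (l2_opNorm_transpose_le A).antisymm (l2_opNorm_transpose_le Aᵀ)

lemma l2_opNorm_map_star [DecidableEq n] (A : Matrix m n 𝕜) :
    ‖A.map star‖ = ‖A‖ := by
  rw [← l2_opNorm_conjTranspose A, ← l2_opNorm_transpose Aᴴ]
  rfl

lemma sum_sq_norm_col_le [DecidableEq n] (A : Matrix m n 𝕜) (j : n) :
    ∑ i, ‖A i j‖ ^ 2 ≤ ‖A‖ ^ 2 := by
  have h := l2_opNorm_mulVec A (EuclideanSpace.single j 1)
  simp only [PiLp.norm_single, norm_one, mul_one, EuclideanSpace.norm_eq] at h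
  simpa using (Real.sqrt_le_left (norm_nonneg _)).mp h

lemma sum_sq_norm_row_le [DecidableEq n] (A : Matrix m n 𝕜) (i : m) :
    ∑ j, ‖A i j‖ ^ 2 ≤ ‖A‖ ^ 2 :=
  l2_opNorm_transpose A ▸ sum_sq_norm_col_le Aᵀ i

lemma norm_entry_le_l2_opNorm [DecidableEq n] (A : Matrix m n 𝕜) (i : m) (j : n) :
    ‖A i j‖ ≤ ‖A‖ :=
  le_of_sq_le_sq (((Finset.single_le_sum (fun k _ => sq_nonneg ‖A k j‖)
    (Finset.mem_univ i))).trans (sum_sq_norm_col_le A j)) (norm_nonneg _)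

-- Cauchy-Schwarz over pairs of indices, with `u i * A i j` against `B i j * v j`.
lemma l2_opNorm_hadamard_le [DecidableEq n] (A B : Matrix m n 𝕜) :
    ‖A ⊙ B‖ ≤ ‖A‖ * ‖B‖ := by
  refine l2_opNorm_le_of_norm_dotProduct_mulVec_le (by positivity) fun u v => ?_
  have hrows : ‖WithLp.toLp 2 fun p : m × n => u p.1 * A p.1 p.2‖ ≤ ‖A‖ * ‖WithLp.toLp 2 u‖ := by
    refine le_of_sq_le_sq ?_ (by positivity)
    simp only [mul_pow, EuclideanSpace.norm_sq_eq, Fintype.sum_prod_type, norm_mul,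
      ← Finset.mul_sum, mul_comm (‖A‖ ^ 2), Finset.sum_mul]
    gcongr with i
    exact sum_sq_norm_row_le A i
  have hcols : ‖WithLp.toLp 2 fun p : m × n => B p.1 p.2 * v p.2‖ ≤ ‖B‖ * ‖WithLp.toLp 2 v‖ := by
    refine le_of_sq_le_sq ?_ (by positivity)
    simp only [mul_pow, EuclideanSpace.norm_sq_eq, Fintype.sum_prod_type_right, norm_mul,
      ← Finset.sum_mul, Finset.mul_sum]
    gcongr with j
    exact sum_sq_norm_col_le B j
  calc ‖u ⬝ᵥ (A ⊙ B) *ᵥ v‖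
      = ‖(fun p : m × n => u p.1 * A p.1 p.2) ⬝ᵥ fun p => B p.1 p.2 * v p.2‖ := by
        simp only [dotProduct, mulVec, hadamard_apply, Finset.mul_sum, Fintype.sum_prod_type,
          mul_assoc]
    _ ≤ (‖A‖ * ‖WithLp.toLp 2 u‖) * (‖B‖ * ‖WithLp.toLp 2 v‖) :=
        (norm_dotProduct_le _ _).trans (by gcongr)
    _ = ‖A‖ * ‖B‖ * (‖WithLp.toLp 2 u‖ * ‖WithLp.toLp 2 v‖) := by ring

lemma norm_sum_sum_le_card_mul [DecidableEq ι] (A : Matrix ι ι 𝕜) :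
    ‖∑ i, ∑ j, A i j‖ ≤ Fintype.card ι * ‖A‖ := by
  have hone : ‖WithLp.toLp 2 (1 : ι → 𝕜)‖ ^ 2 = Fintype.card ι := by
    simp [EuclideanSpace.norm_sq_eq]
  calc ‖∑ i, ∑ j, A i j‖ = ‖1 ⬝ᵥ A *ᵥ 1‖ := by simp [dotProduct, mulVec]
    _ ≤ ‖A‖ * (‖WithLp.toLp 2 (1 : ι → 𝕜)‖ * ‖WithLp.toLp 2 (1 : ι → 𝕜)‖) :=
        norm_dotProduct_mulVec_le A 1 1
    _ = Fintype.card ι * ‖A‖ := by rw [← sq, hone, mul_comm]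

lemma l2_opNorm_one_le [DecidableEq n] : ‖(1 : Matrix n n 𝕜)‖ ≤ 1 := by
  rw [← diagonal_one, l2_opNorm_diagonal, pi_norm_le_iff_of_nonneg zero_le_one]
  exact fun _ => norm_one.le

lemma l2_opNorm_diagonal_le_one [DecidableEq n] {w : n → 𝕜} (hw : ∀ i, ‖w i‖ ≤ 1) :
    ‖(diagonal w : Matrix n n 𝕜)‖ ≤ 1 :=
  (l2_opNorm_diagonal w).trans_le ((pi_norm_le_iff_of_nonneg zero_le_one).2 hw)

lemma l2_opNorm_mul_le_one [DecidableEq n] {A B : Matrix n n 𝕜} (hA : ‖A‖ ≤ 1) (hB : ‖B‖ ≤ 1) :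
    ‖A * B‖ ≤ 1 :=
  (l2_opNorm_mul A B).trans (mul_le_one₀ hA (norm_nonneg B) hB)

lemma l2_opNorm_list_prod_le [DecidableEq n] {l : List (Matrix n n 𝕜)} {r : ℝ}
    (h : ∀ A ∈ l, ‖A‖ ≤ r) : ‖l.prod‖ ≤ r ^ l.length := by
  induction l with
  | nil => simpa using l2_opNorm_one_le
  | cons A l ih =>
    rw [List.forall_mem_cons] at h
    rw [List.prod_cons, List.length_cons, pow_succ']
    exact (l2_opNorm_mul A l.prod).trans
      (mul_le_mul h.1 (ih h.2) (norm_nonneg _) ((norm_nonneg A).trans h.1))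

end OperatorNorm

section SchurMultiplier

open scoped Matrix.Norms.L2Operator

variable {𝕜 m n ι : Type*} [RCLike 𝕜] [Fintype m] [Fintype n] [DecidableEq n]
  [Fintype ι] [DecidableEq ι]

/-- A contractive Schur multiplier: entrywise multiplication by `R` does not increase the
operator norm. -/
def IsSchurMultiplier (R : Matrix m n 𝕜) : Prop := ∀ P : Matrix m n 𝕜, ‖P ⊙ R‖ ≤ ‖P‖

namespace IsSchurMultiplier

variable {R R' : Matrix m n 𝕜}

lemma hadamard (hR : IsSchurMultiplier R) (hR' : IsSchurMultiplier R') :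
    IsSchurMultiplier (R ⊙ R') := fun P =>
  (congrArg norm (hadamard_assoc P R R')).symm.trans_le ((hR' (P ⊙ R)).trans (hR P))

lemma of_norm_le_one (hR : ‖R‖ ≤ 1) : IsSchurMultiplier R := fun P =>
  (l2_opNorm_hadamard_le P R).trans (mul_le_of_le_one_right (norm_nonneg P) hR)

lemma transpose [DecidableEq m] (hR : IsSchurMultiplier R) : IsSchurMultiplier Rᵀ := fun P =>
  calc ‖P ⊙ Rᵀ‖ = ‖Pᵀ ⊙ R‖ := by
        rw [← l2_opNorm_transpose, transpose_hadamard, transpose_transpose]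
    _ ≤ ‖Pᵀ‖ := hR Pᵀ
    _ = ‖P‖ := l2_opNorm_transpose P

lemma row_weight {a : m → 𝕜} (ha : ∀ i, ‖a i‖ ≤ 1) :
    IsSchurMultiplier (Matrix.of fun (i : m) (_ : n) => a i) := fun P => by
  have hmul : P ⊙ Matrix.of (fun i _ => a i) = diagonal a * P := by
    ext i j
    simp [mul_comm]
  have ha' : ‖a‖ ≤ 1 := (pi_norm_le_iff_of_nonneg zero_le_one).2 ha
  rw [hmul]
  refine (l2_opNorm_mul _ _).trans (mul_le_of_le_one_left (norm_nonneg P) ?_)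
  rwa [l2_opNorm_diagonal]

lemma one : IsSchurMultiplier (Matrix.of fun (_ : m) (_ : n) => (1 : 𝕜)) :=
  row_weight fun _ => norm_one.le

end IsSchurMultiplier

/-- A function of three vertices that factors into Schur multipliers of the three pairs, the
pairs being taken cyclically as `(0, 1)`, `(1, 2)`, `(2, 0)`. -/
def IsTriangleMultiplier (T : (Fin 3 → ι) → 𝕜) : Prop :=
  ∃ R : Fin 3 → Matrix ι ι 𝕜, (∀ a, IsSchurMultiplier (R a)) ∧
    ∀ σ, T σ = ∏ a, R a (σ a) (σ (a + 1))

namespace IsTriangleMultiplier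

variable {T T' : (Fin 3 → ι) → 𝕜}

lemma mul (hT : IsTriangleMultiplier T) (hT' : IsTriangleMultiplier T') :
    IsTriangleMultiplier fun σ => T σ * T' σ := by
  obtain ⟨R, hR, hTR⟩ := hT
  obtain ⟨R', hR', hTR'⟩ := hT'
  exact ⟨fun a => R a ⊙ R' a, fun a => (hR a).hadamard (hR' a), fun σ => by
    simp only [hTR, hTR', hadamard_apply, Finset.prod_mul_distrib]⟩

lemma of_isSchurMultiplier {R : Matrix ι ι 𝕜} (hR : IsSchurMultiplier R) (a : Fin 3) :
    IsTriangleMultiplier fun σ => R (σ a) (σ (a + 1)) := by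
  refine ⟨fun b => if b = a then R else Matrix.of fun _ _ => 1, fun b => ?_, fun σ => ?_⟩
  · dsimp only
    split_ifs
    exacts [hR, .one]
  · rw [Finset.prod_eq_single a (fun b _ hb => by simp [hb]) (by simp)]
    simp

lemma weight {u : ι → 𝕜} (hu : ∀ i, ‖u i‖ ≤ 1) (a : Fin 3) :
    IsTriangleMultiplier fun σ => u (σ a) :=
  of_isSchurMultiplier (.row_weight hu) a

lemma one : IsTriangleMultiplier fun _ : Fin 3 → ι => (1 : 𝕜) :=
  weight (u := fun _ => 1) (fun _ => norm_one.le) 0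

lemma prod {κ : Type*} {s : Finset κ} {T : κ → (Fin 3 → ι) → 𝕜}
    (hT : ∀ k ∈ s, IsTriangleMultiplier (T k)) : IsTriangleMultiplier fun σ => ∏ k ∈ s, T k σ := by
  induction s using Finset.cons_induction with
  | empty => simpa only [Finset.prod_empty] using one
  | cons k s hk ih =>
    simp only [Finset.prod_cons]
    rw [Finset.forall_mem_cons] at hT
    exact hT.1.mul (ih hT.2)

lemma entry {Z : Matrix ι ι 𝕜} (hZ : ‖Z‖ ≤ 1) (a b : Fin 3) :
    IsTriangleMultiplier fun σ => Z (σ a) (σ b) := by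
  have hcyclic : b = a ∨ b = a + 1 ∨ a = b + 1 := by revert a b; decide
  rcases hcyclic with rfl | rfl | rfl
  · exact weight (u := fun i => Z i i) (fun i => (norm_entry_le_l2_opNorm Z i i).trans hZ) _
  · exact of_isSchurMultiplier (.of_norm_le_one hZ) _
  · exact of_isSchurMultiplier (IsSchurMultiplier.of_norm_le_one hZ).transpose _

-- The two paths from `σ 1` to `σ 0` multiply to a matrix, which the remaining factor
-- multiplies entrywise.
lemma norm_sum_le_card (hT : IsTriangleMultiplier T) {P Q : Matrix ι ι 𝕜}
    (hP : ‖P‖ ≤ 1) (hQ : ‖Q‖ ≤ 1) :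
    ‖∑ σ, T σ * (P (σ 1) (σ 2) * Q (σ 2) (σ 0))‖ ≤ Fintype.card ι := by
  obtain ⟨R, hR, hTR⟩ := hT
  let e : (Fin 3 → ι) ≃ ι × ι × ι :=
    ⟨fun σ => (σ 1, σ 0, σ 2), fun p => ![p.2.1, p.1, p.2.2],
      fun σ => by ext a; fin_cases a <;> rfl, fun _ => rfl⟩
  set S := ((P ⊙ R 1) * (Q ⊙ R 2)) ⊙ (R 0)ᵀ
  have hsum : ∑ σ, T σ * (P (σ 1) (σ 2) * Q (σ 2) (σ 0)) = ∑ y, ∑ v, S y v := by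
    simp_rw [S, hadamard_apply, mul_apply, Finset.sum_mul]
    simp_rw [← Fintype.sum_prod_type']
    refine Fintype.sum_equiv e _ _ fun σ => ?_
    change _ = (P ⊙ R 1) (σ 1) (σ 2) * (Q ⊙ R 2) (σ 2) (σ 0) * (R 0)ᵀ (σ 1) (σ 0)
    simp only [hTR, Fin.prod_univ_three, hadamard_apply, transpose_apply, Fin.reduceAdd]
    ring
  have hS : ‖S‖ ≤ 1 := ((hR 0).transpose _).trans
    (l2_opNorm_mul_le_one ((hR 1 P).trans hP) ((hR 2 Q).trans hQ))
  rw [hsum]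
  exact (norm_sum_sum_le_card_mul S).trans (mul_le_of_le_one_right (Nat.cast_nonneg _) hS)

end IsTriangleMultiplier

end SchurMultiplier

section BrokenProduct

lemma mul_single_mul_apply {l m n o R : Type*} [Fintype m] [DecidableEq m] [Fintype n]
    [DecidableEq n] [NonUnitalSemiring R] (A : Matrix l m R) (i : m) (j : n) (r : R)
    (B : Matrix n o R) (x : l) (y : o) : (A * single i j r * B) x y = A x i * r * B j y := by
  simp only [mul_apply, single_apply, mul_ite, mul_zero]
  rw [Finset.sum_eq_single j, Finset.sum_eq_single i] <;> simp +contextual [Ne.symm, eq_comm]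

open scoped Matrix.Norms.L2Operator

variable {𝕜 ι : Type*} [RCLike 𝕜] [Fintype ι] [DecidableEq ι]

/-- A matrix depending on three vertices `σ 0, σ 1, σ 2` that behaves like a product of
contractions interrupted by matrix units at these vertices: either there is no interruption, or
only the first and the last matrix unit matter, up to a triangle multiplier. -/
def IsBrokenProduct (U : (Fin 3 → ι) → Matrix ι ι 𝕜) : Prop :=
  (∃ Z : Matrix ι ι 𝕜, ‖Z‖ ≤ 1 ∧ ∀ σ, U σ = Z) ∨
    ∃ (T : (Fin 3 → ι) → 𝕜) (Z Z' : Matrix ι ι 𝕜) (b c : Fin 3),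
      IsTriangleMultiplier T ∧ ‖Z‖ ≤ 1 ∧ ‖Z'‖ ≤ 1 ∧
        ∀ σ, U σ = T σ • (Z * single (σ b) (σ c) 1 * Z')

namespace IsBrokenProduct

variable {U U' : (Fin 3 → ι) → Matrix ι ι 𝕜}

lemma const {Z : Matrix ι ι 𝕜} (hZ : ‖Z‖ ≤ 1) : IsBrokenProduct fun _ => Z :=
  .inl ⟨Z, hZ, fun _ => rfl⟩

lemma matrixUnit (b c : Fin 3) :
    IsBrokenProduct fun σ => (single (σ b) (σ c) 1 : Matrix ι ι 𝕜) :=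
  .inr ⟨fun _ => 1, 1, 1, b, c, .one, l2_opNorm_one_le, l2_opNorm_one_le, fun σ => by simp⟩

lemma mul (hU : IsBrokenProduct U) (hU' : IsBrokenProduct U') :
    IsBrokenProduct fun σ => U σ * U' σ := by
  rcases hU with ⟨A, hA, hUA⟩ | ⟨T, A, B, b, c, hT, hA, hB, hUT⟩ <;>
    rcases hU' with ⟨A', hA', hUA'⟩ | ⟨T', A', B', b', c', hT', hA', hB', hUT'⟩
  · exact .inl ⟨A * A', l2_opNorm_mul_le_one hA hA', fun σ => congr_arg₂ _ (hUA σ) (hUA' σ)⟩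
  · exact .inr ⟨T', A * A', B', b', c', hT', l2_opNorm_mul_le_one hA hA', hB', fun σ => by
      dsimp only
      rw [hUA, hUT', mul_smul_comm]
      simp only [mul_assoc]⟩
  · exact .inr ⟨T, A, B * A', b, c, hT, hA, l2_opNorm_mul_le_one hB hA', fun σ => by
      dsimp only
      rw [hUT, hUA', smul_mul_assoc]
      simp only [mul_assoc]⟩
  · refine .inr ⟨_, A, B', b, c', (hT.mul hT').mul (.entry (l2_opNorm_mul_le_one hB hA') c b'),
      hA, hB', fun σ => ?_⟩
    have hmid : single (σ b) (σ c) 1 * (B * A') * single (σ b') (σ c') 1 =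
        (B * A') (σ c) (σ b') • (single (σ b) (σ c') 1 : Matrix ι ι 𝕜) := by
      rw [single_mul_mul_single, smul_single, smul_eq_mul]
      simp
    calc U σ * U' σ
        = (T σ * T' σ) •
          (A * (single (σ b) (σ c) 1 * (B * A') * single (σ b') (σ c') 1) * B') := by
          rw [hUT, hUT', smul_mul_smul_comm]
          simp only [mul_assoc]
      _ = _ := by rw [hmid, mul_smul_comm, smul_mul_assoc, smul_smul]

lemma list_prod {κ : Type*} (l : List κ) {U : κ → (Fin 3 → ι) → Matrix ι ι 𝕜}
    (hU : ∀ k ∈ l, IsBrokenProduct (U k)) :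
    IsBrokenProduct fun σ => (l.map fun k => U k σ).prod := by
  induction l with
  | nil => exact const l2_opNorm_one_le
  | cons k l ih =>
    rw [List.forall_mem_cons] at hU
    simpa only [List.map_cons, List.prod_cons] using hU.1.mul (ih hU.2)

lemma entry (hU : IsBrokenProduct U) (a a' : Fin 3) :
    IsTriangleMultiplier fun σ => U σ (σ a) (σ a') := by
  rcases hU with ⟨Z, hZ, hUZ⟩ | ⟨T, Z, Z', b, c, hT, hZ, hZ', hUT⟩
  · simpa only [hUZ] using IsTriangleMultiplier.entry hZ a a'
  · have hentry : ∀ σ, U σ (σ a) (σ a') = T σ * (Z (σ a) (σ b) * Z' (σ c) (σ a')) := fun σ => by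
      rw [hUT, Matrix.smul_apply, smul_eq_mul, mul_single_mul_apply, mul_one]
    simpa only [hentry] using hT.mul ((IsTriangleMultiplier.entry hZ a b).mul (.entry hZ' c a'))

lemma norm_sum_le_card (hU : IsBrokenProduct U) {T : (Fin 3 → ι) → 𝕜}
    (hT : IsTriangleMultiplier T) {A B : Matrix ι ι 𝕜} (hA : ‖A‖ ≤ 1) (hB : ‖B‖ ≤ 1) :
    ‖∑ σ : Fin 3 → ι, T σ *
      (A * single (σ 2) (σ 2) 1 * U σ * (single (σ 2) (σ 2) 1 * B) : Matrix ι ι 𝕜) (σ 1) (σ 0)‖ ≤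
      Fintype.card ι := by
  have hentry : ∀ σ : Fin 3 → ι,
      (A * single (σ 2) (σ 2) 1 * U σ * (single (σ 2) (σ 2) 1 * B) : Matrix ι ι 𝕜) (σ 1) (σ 0) =
        U σ (σ 2) (σ 2) * (A (σ 1) (σ 2) * B (σ 2) (σ 0)) := fun σ => by
    have hmid : single (σ 2) (σ 2) 1 * U σ * single (σ 2) (σ 2) 1 =
        single (σ 2) (σ 2) (U σ (σ 2) (σ 2)) := by
      rw [single_mul_mul_single, one_mul, mul_one]
    calc _ = (A * (single (σ 2) (σ 2) 1 * U σ * single (σ 2) (σ 2) 1) * B :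
          Matrix ι ι 𝕜) (σ 1) (σ 0) := by
          simp only [mul_assoc]
      _ = _ := by
          rw [hmid, mul_single_mul_apply]
          ring
  simpa only [hentry, ← mul_assoc] using (hT.mul (hU.entry 2 2)).norm_sum_le_card hA hB

end IsBrokenProduct

end BrokenProduct

section WeightedSum

variable {𝕜 ι S : Type*} [RCLike 𝕜] [Fintype ι] [Fintype S]

/-- The sum of `F` over all labellings of `S` by `ι` is bounded by `B`, even after
multiplication by a weight of modulus at most `1` depending on the label of each `s`. -/
def WeightedSumBound (F : (S → ι) → 𝕜) (B : ℝ) : Prop :=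
  ∀ W : S → ι → 𝕜, (∀ s i, ‖W s i‖ ≤ 1) → ‖∑ Ψ, (∏ s, W s (Ψ s)) * F Ψ‖ ≤ B

lemma sum_sign_mul_sign (x y : ι) :
    ∑ ε : ι → ℤˣ, (((ε x : ℤ) : 𝕜) * ((ε y : ℤ) : 𝕜)) =
      if x = y then 2 ^ Fintype.card ι else 0 := by
  split_ifs with hxy
  · subst hxy
    simp [← Int.cast_mul, ← Units.val_mul, Int.units_mul_self]
  · let flip : (ι → ℤˣ) ≃ (ι → ℤˣ) := Equiv.mulLeft (Pi.mulSingle x (-1))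
    refine self_eq_neg.1 ?_
    rw [← Finset.sum_neg_distrib]
    refine Fintype.sum_equiv flip _ _ fun ε => ?_
    simp [flip, Pi.mulSingle_eq_of_ne (Ne.symm hxy)]

namespace WeightedSumBound

variable {F : (S → ι) → 𝕜} {B : ℝ}

lemma nonneg (h : WeightedSumBound F B) : 0 ≤ B :=
  (norm_nonneg _).trans (h (fun _ _ => 1) fun _ _ => norm_one.le)

lemma norm_sum_le (h : WeightedSumBound F B) : ‖∑ Ψ, F Ψ‖ ≤ B := by
  simpa using h (fun _ _ => 1) fun _ _ => norm_one.le

lemma norm_le (h : WeightedSumBound F B) (Ψ : S → ι) : ‖F Ψ‖ ≤ B := by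
  have hsum : ∑ Ψ', (∏ s, if Ψ' s = Ψ s then (1 : 𝕜) else 0) * F Ψ' = F Ψ := by
    simp [Finset.prod_ite_zero, ← funext_iff]
  exact hsum ▸ h (fun s i => if i = Ψ s then 1 else 0) fun s i => by split_ifs <;> simp

lemma mul_weight (h : WeightedSumBound F B) {s : S} {u : ι → 𝕜} (hu : ∀ i, ‖u i‖ ≤ 1) :
    WeightedSumBound (fun Ψ => u (Ψ s) * F Ψ) B := fun W hW => by
  have hprod : ∀ Ψ : S → ι, (∏ t, W t (Ψ t)) * (u (Ψ s) * F Ψ) =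
      (∏ t, (if t = s then u (Ψ t) else 1) * W t (Ψ t)) * F Ψ := fun Ψ => by
    rw [Finset.prod_mul_distrib, Finset.prod_ite_eq' Finset.univ s, if_pos (Finset.mem_univ s)]
    ring
  simp only [hprod]
  refine h (fun t i => (if t = s then u i else 1) * W t i) fun t i => ?_
  rw [norm_mul]
  refine mul_le_one₀ ?_ (norm_nonneg _) (hW t i)
  split_ifs
  exacts [hu i, norm_one.le]

-- An equality is an average of products of signs, hence costs nothing.
lemma restrict_eq (h : WeightedSumBound F B) (s t : S) :
    WeightedSumBound (fun Ψ => if Ψ s = Ψ t then F Ψ else 0) B := fun W hW => by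
  set sgn : (ι → ℤˣ) → ι → 𝕜 := fun ε i => ((ε i : ℤ) : 𝕜)
  have hsgn : ∀ ε i, ‖sgn ε i‖ ≤ 1 := fun ε i => by
    rcases Int.units_eq_one_or (ε i) with h | h <;> simp [sgn, h]
  set G : (ι → ℤˣ) → 𝕜 := fun ε => ∑ Ψ, (∏ r, W r (Ψ r)) * (sgn ε (Ψ s) * (sgn ε (Ψ t) * F Ψ))
  have hG : ∑ ε, G ε =
      2 ^ Fintype.card ι * ∑ Ψ, (∏ r, W r (Ψ r)) * (if Ψ s = Ψ t then F Ψ else 0) := by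
    simp only [G]
    rw [Finset.sum_comm, Finset.mul_sum]
    refine Finset.sum_congr rfl fun Ψ _ => ?_
    have hsum := sum_sign_mul_sign (𝕜 := 𝕜) (Ψ s) (Ψ t)
    simp only [← mul_assoc (sgn _ _), mul_left_comm (∏ r, W r (Ψ r)), ← Finset.sum_mul, sgn]
    rw [hsum]
    split_ifs <;> ring
  have hcard : (Fintype.card (ι → ℤˣ) : ℝ) = 2 ^ Fintype.card ι := by simp
  have hle : ‖∑ ε, G ε‖ ≤ 2 ^ Fintype.card ι * B := by
    refine (norm_sum_le_of_le _ fun ε _ =>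
      (h.mul_weight (hsgn ε)).mul_weight (hsgn ε) W hW).trans_eq ?_
    rw [Finset.sum_const, nsmul_eq_mul, Finset.card_univ, hcard]
  rw [hG, norm_mul, norm_pow, RCLike.norm_ofNat] at hle
  exact le_of_mul_le_mul_left hle (by positivity)

lemma restrict_ne (h : WeightedSumBound F B) (s t : S) :
    WeightedSumBound (fun Ψ => if Ψ s = Ψ t then 0 else F Ψ) (2 * B) := fun W hW => by
  have hsub : ∀ Ψ : S → ι, (∏ r, W r (Ψ r)) * (if Ψ s = Ψ t then 0 else F Ψ) =
      (∏ r, W r (Ψ r)) * F Ψ - (∏ r, W r (Ψ r)) * (if Ψ s = Ψ t then F Ψ else 0) := fun Ψ => by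
    split_ifs <;> ring
  simp only [hsub, Finset.sum_sub_distrib]
  refine (norm_sub_le _ _).trans ?_
  linarith [h W hW, h.restrict_eq s t W hW]

lemma restrict_iff (h : WeightedSumBound F B) (s t : S) (P : Prop) :
    WeightedSumBound (fun Ψ => if (Ψ s = Ψ t ↔ P) then F Ψ else 0) (2 * B) := by
  by_cases hP : P
  · simp only [hP, iff_true]
    exact fun W hW => (h.restrict_eq s t W hW).trans (by linarith [h.nonneg])
  · simp only [hP, iff_false, ite_not]
    exact h.restrict_ne s t

lemma restrict_forall_iff (h : WeightedSumBound F B) (l : Finset (S × S)) (P : S → S → Prop) :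
    WeightedSumBound (fun Ψ => if ∀ p ∈ l, (Ψ p.1 = Ψ p.2 ↔ P p.1 p.2) then F Ψ else 0)
      (2 ^ l.card * B) := by
  induction l using Finset.cons_induction with
  | empty => simpa using h
  | cons p l hp ih =>
    have := ih.restrict_iff p.1 p.2 (P p.1 p.2)
    simp only [Finset.forall_mem_cons, Finset.card_cons, pow_succ', mul_assoc, ite_and]
    exact this

lemma norm_sum_ker_eq_le (h : WeightedSumBound F B) (r : Setoid S) :
    ‖∑ Ψ with Setoid.ker Ψ = r, F Ψ‖ ≤ 2 ^ Fintype.card S ^ 2 * B := by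
  have hall := (h.restrict_forall_iff Finset.univ r).norm_sum_le
  rw [← Finset.sum_filter, Finset.card_univ, Fintype.card_prod, ← sq] at hall
  simpa only [Setoid.ext_iff, Setoid.ker_def, Finset.mem_univ, true_imp_iff, Prod.forall]
    using hall

end WeightedSumBound

end WeightedSum

section CoincidencePattern

variable {𝕜 ι S : Type*} [RCLike 𝕜] [Fintype ι]

lemma exists_perm_comp_eq_of_ker_eq {ι S : Type*} [Finite ι] {Ψ Ψ' : S → ι}
    (h : Setoid.ker Ψ = Setoid.ker Ψ') : ∃ τ : Equiv.Perm ι, τ ∘ Ψ' = Ψ := by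
  let e : Set.range Ψ' ≃ Set.range Ψ := (Setoid.quotientKerEquivRange Ψ').symm.trans
    ((Quotient.congrRight fun _ _ => by rw [h]).trans (Setoid.quotientKerEquivRange Ψ))
  refine ⟨Equiv.extendSubtype (p := (· ∈ Set.range Ψ')) (q := (· ∈ Set.range Ψ)) e,
    funext fun a => ?_⟩
  have hquot : (Setoid.quotientKerEquivRange Ψ').symm ⟨Ψ' a, a, rfl⟩ = Quotient.mk _ a :=
    (Equiv.symm_apply_eq _).2 rfl
  rw [Function.comp_apply, Equiv.extendSubtype_apply_of_mem _ _ (Set.mem_range_self a)]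
  simp only [e, Equiv.trans_apply]
  rw [hquot]
  rfl

variable [Fintype S]

lemma pow_ncard_range_le_card_ker_eq (Ψ₀ : S → ι)
    (hcard : 2 * Fintype.card S ≤ Fintype.card ι) :
    Fintype.card ι ^ (Set.range Ψ₀).ncard ≤
      2 ^ Fintype.card S * (Finset.univ.filter fun Ψ : S → ι =>
        Setoid.ker Ψ = Setoid.ker Ψ₀).card := by
  set r := (Set.range Ψ₀).ncard
  have hr : Fintype.card (Set.range Ψ₀) = r := Fintype.card_eq_nat_card
  have hrS : r ≤ Fintype.card S := hr ▸ Fintype.card_range_le Ψ₀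
  have hembed : Fintype.card (Set.range Ψ₀ ↪ ι) ≤
      (Finset.univ.filter fun Ψ : S → ι => Setoid.ker Ψ = Setoid.ker Ψ₀).card := by
    refine Finset.card_le_card_of_injOn (fun e => e ∘ Set.rangeFactorization Ψ₀)
      (fun e _ => ?_) fun e _ e' _ hee => ?_
    · simp [Setoid.ext_iff, Setoid.ker_def, Set.rangeFactorization]
    · exact DFunLike.coe_injective (Set.rangeFactorization_surjective.injective_comp_right hee)
  rw [Fintype.card_embedding_eq, hr] at hembed
  calc Fintype.card ι ^ r ≤ (2 * (Fintype.card ι + 1 - r)) ^ r :=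
        Nat.pow_le_pow_left (by omega) r
    _ = 2 ^ r * (Fintype.card ι + 1 - r) ^ r := mul_pow _ _ _
    _ ≤ _ := Nat.mul_le_mul (Nat.pow_le_pow_right (by norm_num) hrS)
        ((Nat.pow_sub_le_descFactorial _ r).trans hembed)

lemma WeightedSumBound.norm_integral_mul_pow_le {Ω : Type*} [MeasurableSpace Ω] {μ : Measure Ω}
    [IsProbabilityMeasure μ] {F : Ω → (S → ι) → 𝕜} {B : ℝ} {I : 𝕜} {Ψ₀ : S → ι}
    (hbound : ∀ᵐ ω ∂μ, WeightedSumBound (F ω) B)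
    (hmeas : ∀ Ψ, AEStronglyMeasurable (fun ω => F ω Ψ) μ)
    (hI : ∀ Ψ, Setoid.ker Ψ = Setoid.ker Ψ₀ → ∫ ω, F ω Ψ ∂μ = I)
    (hcard : 2 * Fintype.card S ≤ Fintype.card ι) :
    ‖I‖ * Fintype.card ι ^ (Set.range Ψ₀).ncard ≤
      2 ^ (Fintype.card S ^ 2 + Fintype.card S) * B := by
  set P := Finset.univ.filter fun Ψ : S → ι => Setoid.ker Ψ = Setoid.ker Ψ₀
  have hsum : P.card * ‖I‖ ≤ 2 ^ Fintype.card S ^ 2 * B := by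
    have h := norm_integral_le_of_norm_le_const
      (hbound.mono fun ω hω => hω.norm_sum_ker_eq_le (Setoid.ker Ψ₀))
    rw [integral_finsetSum _ fun Ψ _ =>
        .of_bound (hmeas Ψ) B (hbound.mono fun ω hω => hω.norm_le Ψ),
      Finset.sum_congr rfl fun Ψ hΨ => hI Ψ (Finset.mem_filter.1 hΨ).2] at h
    simpa using h
  have hcount : (Fintype.card ι : ℝ) ^ (Set.range Ψ₀).ncard ≤ 2 ^ Fintype.card S * P.card := by
    exact_mod_cast pow_ncard_range_le_card_ker_eq Ψ₀ hcard
  calc ‖I‖ * Fintype.card ι ^ (Set.range Ψ₀).ncard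
      ≤ ‖I‖ * (2 ^ Fintype.card S * P.card) := by gcongr
    _ = 2 ^ Fintype.card S * (P.card * ‖I‖) := by ring
    _ ≤ 2 ^ Fintype.card S * (2 ^ Fintype.card S ^ 2 * B) := by gcongr
    _ = 2 ^ (Fintype.card S ^ 2 + Fintype.card S) * B := by rw [pow_add]; ring

end CoincidencePattern

section PathSum

/-- The infinite walk which follows `φ` and then stays at `y` from time `m` on. -/
def walkExt {α : Type*} {m : ℕ} (φ : Fin m → α) (y : α) (k : ℕ) : α :=
  if h : k < m then φ ⟨k, h⟩ else y

lemma walkExt_of_lt {α : Type*} {m : ℕ} (φ : Fin m → α) (y : α) {k : ℕ} (h : k < m) :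
    walkExt φ y k = φ ⟨k, h⟩ :=
  dif_pos h

lemma walkExt_of_le {α : Type*} {m : ℕ} (φ : Fin m → α) (y : α) {k : ℕ} (h : m ≤ k) :
    walkExt φ y k = y :=
  dif_neg h.not_gt

lemma walkExt_comp {α β : Type*} {m : ℕ} (g : α → β) (φ : Fin m → α) (y : α) (k : ℕ) :
    walkExt (g ∘ φ) (g y) k = g (walkExt φ y k) :=
  (apply_dite g _ _ _).symm

lemma norm_walkExt_le {α : Type*} [Norm α] {m : ℕ} {φ : Fin m → α} {y : α} {C : ℝ}
    (hφ : ∀ k, ‖φ k‖ ≤ C) (hy : ‖y‖ ≤ C) (k : ℕ) : ‖walkExt φ y k‖ ≤ C := by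
  unfold walkExt
  split_ifs
  exacts [hφ _, hy]

lemma walkExt_append_add {α : Type*} {m m' : ℕ} (φ : Fin m → α) (ψ : Fin m' → α) (y : α) (j : ℕ) :
    walkExt (Fin.append φ ψ) y (m + j) = walkExt ψ y j := by
  rcases lt_or_ge j m' with h | h
  · rw [walkExt_of_lt _ _ h, walkExt_of_lt _ _ (Nat.add_lt_add_left h m)]
    exact Fin.append_right φ ψ ⟨j, h⟩
  · rw [walkExt_of_le _ _ h, walkExt_of_le _ _ (Nat.add_le_add_left h m)]

lemma walkExt_append_of_le {α : Type*} {m m' : ℕ} (φ : Fin m → α) (ψ : Fin m' → α) (y : α) {k : ℕ}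
    (hk : k ≤ m) : walkExt (Fin.append φ ψ) y k = walkExt φ (walkExt ψ y 0) k := by
  rcases hk.lt_or_eq with h | rfl
  · rw [walkExt_of_lt _ _ h, walkExt_of_lt _ _ (h.trans_le (Nat.le_add_right m m'))]
    exact Fin.append_left φ ψ ⟨k, h⟩
  · rw [walkExt_of_le φ _ le_rfl, ← walkExt_append_add φ ψ y 0, add_zero]

/-- The infinite sequence which runs through `φ` over and over again. -/
def cyclicWalk {α : Type*} {m : ℕ} [NeZero m] (φ : Fin m → α) (k : ℕ) : α :=
  φ (Fin.ofNat m k)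

lemma cyclicWalk_of_lt {α : Type*} {m : ℕ} [NeZero m] (φ : Fin m → α) {k : ℕ} (hk : k < m) :
    cyclicWalk φ k = φ ⟨k, hk⟩ :=
  congrArg φ (Fin.ext (Nat.mod_eq_of_lt hk))

lemma cyclicWalk_periodic {α : Type*} {m : ℕ} [NeZero m] (φ : Fin m → α) :
    Function.Periodic (cyclicWalk φ) m := fun k =>
  congrArg φ (Fin.ext (Nat.add_mod_right k m))

lemma range_cyclicWalk {α : Type*} {m : ℕ} [NeZero m] (φ : Fin m → α) :
    Set.range (cyclicWalk φ) = Set.range φ :=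
  (Function.LeftInverse.surjective (f := Fin.ofNat m) (g := Fin.val)
    Fin.cast_val_eq_self).range_comp φ

lemma walkExt_eq_cyclicWalk {α : Type*} {m : ℕ} [NeZero m] (φ : Fin m → α) {k : ℕ} (hk : k ≤ m) :
    walkExt φ (φ ⟨0, NeZero.pos m⟩) k = cyclicWalk φ k := by
  rcases hk.lt_or_eq with h | rfl
  · rw [walkExt_of_lt _ _ h, cyclicWalk_of_lt φ h]
  · rw [walkExt_of_le _ _ le_rfl]
    exact congrArg φ (Fin.ext (Nat.mod_self k).symm)

/-- The weight `w` of a walk depends only on its first `m` steps. -/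
def LocalTo {α R : Type*} (m : ℕ) (w : (ℕ → α) → R) : Prop :=
  ∀ f g : ℕ → α, (∀ k ≤ m, f k = g k) → w f = w g

variable {ι R : Type*} [Fintype ι] [DecidableEq ι] [CommSemiring R]

/-- The entry `P x y` is the sum, over the walks of length `m` from `x` to `y`, of the weight `w`
times the product of the entries of the matrices `Y k` along the walk. -/
def IsPathSum (P : Matrix ι ι R) (m : ℕ) (w : (ℕ → ι) → R) (Y : ℕ → Matrix ι ι R) : Prop :=
  ∀ x y, P x y = ∑ φ : Fin m → ι, if walkExt φ y 0 = x then
    w (walkExt φ y) * ∏ k ∈ Finset.range m, Y k (walkExt φ y k) (walkExt φ y (k + 1)) else 0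

namespace IsPathSum

variable {P Q : Matrix ι ι R} {m m' : ℕ} {w w' : (ℕ → ι) → R} {Y Y' : ℕ → Matrix ι ι R}

lemma one : IsPathSum (1 : Matrix ι ι R) 0 (fun _ => 1) Y := fun x y => by
  simp [walkExt, Matrix.one_apply, eq_comm]

lemma diagonal_mul (b : ι → R) : IsPathSum (diagonal b * Y 0) 1 (fun f => b (f 0)) Y :=
  fun x y => by
    rw [← (Equiv.funUnique (Fin 1) ι).symm.sum_comp]
    simp [walkExt, Matrix.diagonal_mul]

lemma mul (hP : IsPathSum P m w Y) (hw : LocalTo m w)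
    (hQ : IsPathSum Q m' w' fun k => Y (m + k)) :
    IsPathSum (P * Q) (m + m') (fun f => w f * w' fun j => f (m + j)) Y := fun x y => by
  rw [Matrix.mul_apply, ← (Fin.appendEquiv m m').sum_comp, Fintype.sum_prod_type]
  simp only [hP x, hQ _ y, Finset.sum_mul]
  rw [Finset.sum_comm]
  refine Finset.sum_congr rfl fun φ _ => ?_
  simp only [Finset.mul_sum]
  rw [Finset.sum_comm]
  refine Finset.sum_congr rfl fun ψ _ => ?_
  simp only [mul_ite, mul_zero, Finset.sum_ite_eq, Finset.mem_univ, if_true]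
  have hφ : ∀ k ≤ m, walkExt (Fin.appendEquiv m m' (φ, ψ)) y k = walkExt φ (walkExt ψ y 0) k :=
    fun k hk => walkExt_append_of_le φ ψ y hk
  have hψ : ∀ j, walkExt (Fin.appendEquiv m m' (φ, ψ)) y (m + j) = walkExt ψ y j :=
    walkExt_append_add φ ψ y
  have hprod : ∏ k ∈ Finset.range m, Y k (walkExt (Fin.appendEquiv m m' (φ, ψ)) y k)
      (walkExt (Fin.appendEquiv m m' (φ, ψ)) y (k + 1)) =
      ∏ k ∈ Finset.range m, Y k (walkExt φ (walkExt ψ y 0) k)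
        (walkExt φ (walkExt ψ y 0) (k + 1)) :=
    Finset.prod_congr rfl fun k hk => by
      rw [hφ k (Finset.mem_range.1 hk).le, hφ (k + 1) (Finset.mem_range.1 hk)]
  rw [hφ 0 (Nat.zero_le m), hw _ _ hφ, Finset.prod_range_add, hprod]
  simp only [add_assoc, hψ]
  split_ifs
  · ring
  · exact zero_mul _

lemma congr (hP : IsPathSum P m w Y) (hw : ∀ f, w f = w' f) (hY : ∀ k < m, Y k = Y' k) :
    IsPathSum P m w' Y' := fun x y => by
  rw [hP x y]
  refine Finset.sum_congr rfl fun φ _ => ?_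
  rw [hw, Finset.prod_congr rfl fun k hk => by rw [hY k (Finset.mem_range.1 hk)]]

lemma list_prod {P : ℕ → Matrix ι ι R} {d : ℕ} {w : ℕ → (ℕ → ι) → R} (n : ℕ)
    (hP : ∀ a < n, IsPathSum (P a) d (w a) fun k => Y (a * d + k))
    (hw : ∀ a < n, LocalTo d (w a)) :
    IsPathSum ((List.range n).map P).prod (n * d)
      (fun f => ∏ a ∈ Finset.range n, w a fun j => f (a * d + j)) Y := by
  induction n with
  | zero => simpa using one
  | succ n ih =>
    rw [List.range_succ, List.map_append, List.prod_append, List.map_singleton,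
      List.prod_singleton, Nat.succ_mul]
    refine ((ih (fun a ha => hP a (by omega)) fun a ha => hw a (by omega)).mul ?_
      (hP n (by omega))).congr (fun f => (Finset.prod_range_succ _ n).symm) fun _ _ => rfl
    intro f g h
    refine Finset.prod_congr rfl fun a ha => ?_
    have ha' : a < n := Finset.mem_range.1 ha
    refine hw a (by omega) _ _ fun k hk => h _ ?_
    have hle : (a + 1) * d ≤ n * d := Nat.mul_le_mul_right d ha'
    rw [add_mul] at hle
    omega

lemma trace_eq [NeZero m] (hP : IsPathSum P m w Y) (hw : LocalTo m w) :
    P.trace = ∑ φ : Fin m → ι, w (cyclicWalk φ) *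
      ∏ k ∈ Finset.range m, Y k (cyclicWalk φ k) (cyclicWalk φ (k + 1)) := by
  simp only [Matrix.trace, Matrix.diag_apply, hP _ _, walkExt_of_lt _ _ (NeZero.pos m)]
  rw [Finset.sum_comm]
  refine Finset.sum_congr rfl fun φ _ => ?_
  rw [Finset.sum_ite_eq Finset.univ, if_pos (Finset.mem_univ _)]
  rw [hw _ _ fun k hk => walkExt_eq_cyclicWalk φ hk]
  congr 1
  refine Finset.prod_congr rfl fun k hk => ?_
  rw [walkExt_eq_cyclicWalk φ (Finset.mem_range.1 hk).le,
    walkExt_eq_cyclicWalk φ (Nat.succ_le_of_lt (Finset.mem_range.1 hk))]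

lemma map_star [StarRing R] (hP : IsPathSum P m w Y) :
    IsPathSum (P.map star) m (fun f => star (w f)) fun k => (Y k).map star := fun x y => by
  rw [Matrix.map_apply, hP x y, star_sum]
  refine Finset.sum_congr rfl fun φ _ => ?_
  rw [apply_ite star, star_zero, star_mul', star_prod]
  simp only [Matrix.map_apply]

lemma mul_map_star [StarRing R] (hP : IsPathSum P m w Y) (hw : LocalTo m w)
    (hY : ∀ k < m, Y (m + k) = (Y k).map star) :
    IsPathSum (P * P.map star) (2 * m) (fun f => w f * star (w fun j => f (m + j))) Y := by
  rw [two_mul]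
  exact hP.mul hw (hP.map_star.congr (fun _ => rfl) fun k hk => (hY k hk).symm)

variable {N : ℕ} {P : Matrix (Fin N) (Fin N) ℂ} {w : (ℕ → Fin N) → ℂ}
  {Y : ℕ → Matrix (Fin N) (Fin N) ℂ}

lemma dproj (hP : IsPathSum P m w Y) :
    IsPathSum (dproj P) m (fun f => if f 0 = f m then w f else 0) Y := fun x y => by
  rw [_root_.dproj, Matrix.of_apply, hP x y]
  simp only [walkExt_of_le _ y le_rfl, ite_mul, zero_mul]
  by_cases hxy : x = y
  · subst hxy
    rw [if_pos rfl]
    exact Finset.sum_congr rfl fun φ _ => by split_ifs <;> rfl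
  · rw [if_neg hxy, Finset.sum_eq_zero]
    intro φ _
    split_ifs with hx hy
    exacts [absurd (hx.symm.trans hy) hxy, rfl, rfl]

lemma sub_dproj (hP : IsPathSum P m w Y) :
    IsPathSum (P - _root_.dproj P) m (fun f => if f 0 = f m then 0 else w f) Y := fun x y => by
  rw [Matrix.sub_apply, hP x y, hP.dproj x y, ← Finset.sum_sub_distrib]
  refine Finset.sum_congr rfl fun φ _ => ?_
  by_cases hφ : walkExt φ y 0 = walkExt φ y m <;> simp [hφ]

end IsPathSum

end PathSum

section BrokenWalk

lemma list_range_eq_append_cons_append_cons {q₁ q₂ M : ℕ} (h₁ : q₁ < q₂) (h₂ : q₂ < M) :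
    List.range M = List.range' 0 q₁ ++ q₁ :: (List.range' (q₁ + 1) (q₂ - (q₁ + 1)) ++
      q₂ :: List.range' (q₂ + 1) (M - (q₂ + 1))) := by
  have hq₂ : q₂ = q₁ + 1 + (q₂ - (q₁ + 1)) := by omega
  calc List.range M
      = List.range' 0 (q₁ + (1 + (q₂ - (q₁ + 1)) + (1 + (M - (q₂ + 1))))) := by
        rw [List.range_eq_range']
        congr 1
        omega
    _ = _ := by
        rw [← List.range'_append_1, ← List.range'_append_1, ← List.range'_append_1 (m := 1),
          ← List.range'_append_1 (m := 1), zero_add, ← add_assoc, ← hq₂]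
        rfl

lemma sum_sum_arrow {α β ι A : Type*} [AddCommMonoid A] [Fintype (α → ι)] [Fintype (β → ι)]
    [Fintype (α ⊕ β → ι)] (F : (α ⊕ β → ι) → A) :
    ∑ Ψ, F Ψ = ∑ φ : α → ι, ∑ ψ : β → ι, F (Sum.elim φ ψ) := by
  rw [← (Equiv.sumArrowEquivProdArrow α β ι).symm.sum_comp, Fintype.sum_prod_type]
  rfl

open scoped Matrix.Norms.L2Operator

variable {𝕜 ι : Type*} [RCLike 𝕜] [DecidableEq ι]

/-- The matrix inserted at a vertex of a closed walk: the identity at an ordinary vertex, and at a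
vertex which is split into the special vertices `σ b` and `σ c` the matrix unit joining them. -/
def junction : Option (Fin 3 × Fin 3) → (Fin 3 → ι) → Matrix ι ι 𝕜
  | none, _ => 1
  | some (b, c), σ => single (σ b) (σ c) 1

lemma isBrokenProduct_junction [Fintype ι] (o : Option (Fin 3 × Fin 3)) :
    IsBrokenProduct (junction o : (Fin 3 → ι) → Matrix ι ι 𝕜) := by
  rcases o with _ | ⟨b, c⟩
  exacts [.const l2_opNorm_one_le, .matrixUnit b c]

lemma junction_perm_comp (o : Option (Fin 3 × Fin 3)) (τ : Equiv.Perm ι) (σ : Fin 3 → ι) (x y : ι) :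
    junction o (τ ∘ σ) (τ x) (τ y) = (junction o σ x y : 𝕜) := by
  rcases o with _ | ⟨b, c⟩ <;> simp [junction, Matrix.one_apply, Matrix.single_apply]

/-- The product of the entries of the matrices `Y k` and of the junctions `j k` along the walk
`r 0, s 0, r 1, s 1, …` which arrives at `r k` and departs from `s k` at time `k`, starting at the
special vertex `σ 1` and ending at the special vertex `σ 0`. -/
def brokenWalk {M : ℕ} (Y : ℕ → Matrix ι ι 𝕜) (j : ℕ → Option (Fin 3 × Fin 3)) (σ : Fin 3 → ι)
    (r s : Fin M → ι) : 𝕜 :=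
  if walkExt r (σ 0) 0 = σ 1 then
    ∏ k : Fin M, junction (j k) σ (walkExt r (σ 0) k) (s k) * Y k (s k) (walkExt r (σ 0) (k + 1))
  else 0

lemma brokenWalk_perm_comp {M : ℕ} (Y : ℕ → Matrix ι ι 𝕜) {j : ℕ → Option (Fin 3 × Fin 3)}
    {σ : Fin 3 → ι} {r s : Fin M → ι} (hr : walkExt r (σ 0) 0 = σ 1)
    (hj : ∀ k : Fin M, junction (j k) σ (walkExt r (σ 0) k) (s k) = (1 : 𝕜)) (τ : Equiv.Perm ι) :
    brokenWalk Y j (τ ∘ σ) (τ ∘ r) (τ ∘ s) =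
      ∏ k : Fin M, Y k (τ (s k)) (τ (walkExt r (σ 0) (k + 1))) := by
  simp only [brokenWalk, Function.comp_apply, walkExt_comp τ, hr, if_true, junction_perm_comp, hj,
    one_mul]

variable [Fintype ι]

/-- The transfer matrix of the `k`-th step of a broken walk, with weights `u k` and `v k` on its
point of arrival and on its point of departure at time `k`. -/
def brokenStep (Y : ℕ → Matrix ι ι 𝕜) (j : ℕ → Option (Fin 3 × Fin 3)) (u v : ℕ → ι → 𝕜)
    (σ : Fin 3 → ι) (k : ℕ) : Matrix ι ι 𝕜 :=
  diagonal (u k) * junction (j k) σ * (diagonal (v k) * Y k)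

lemma brokenStep_apply (Y : ℕ → Matrix ι ι 𝕜) (j : ℕ → Option (Fin 3 × Fin 3)) (u v : ℕ → ι → 𝕜)
    (σ : Fin 3 → ι) (k : ℕ) (x y : ι) :
    brokenStep Y j u v σ k x y =
      ∑ t, u k x * v k t * (junction (j k) σ x t * Y k t y) := by
  rw [brokenStep, Matrix.mul_apply]
  simp only [Matrix.diagonal_mul]
  exact Finset.sum_congr rfl fun t _ => by ring

lemma sum_brokenWalk_eq_list_prod {M : ℕ} (Y : ℕ → Matrix ι ι 𝕜) (j : ℕ → Option (Fin 3 × Fin 3))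
    (σ : Fin 3 → ι) (u v : ℕ → ι → 𝕜) :
    ∑ r : Fin M → ι, ∑ s : Fin M → ι,
        (∏ k : Fin M, u k (r k)) * (∏ k : Fin M, v k (s k)) * brokenWalk Y j σ r s =
      ((List.range M).map (brokenStep Y j u v σ)).prod (σ 1) (σ 0) := by
  have hpath : IsPathSum ((List.range M).map (brokenStep Y j u v σ)).prod (M * 1)
      (fun _ => ∏ _ ∈ Finset.range M, 1) (brokenStep Y j u v σ) :=
    .list_prod M (w := fun _ _ => 1) (fun k _ => by
      simpa using IsPathSum.diagonal_mul (Y := fun i => brokenStep Y j u v σ (k * 1 + i)) 1)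
      fun _ _ _ _ _ => rfl
  rw [mul_one] at hpath
  rw [hpath]
  refine Finset.sum_congr rfl fun r _ => ?_
  rw [Finset.prod_const_one, one_mul, ← Fin.prod_univ_eq_prod_range fun k =>
    brokenStep Y j u v σ k (walkExt r (σ 0) k) (walkExt r (σ 0) (k + 1))]
  simp only [brokenStep_apply, Finset.prod_univ_sum, Fintype.piFinset_univ, brokenWalk,
    walkExt_of_lt r _ (Fin.is_lt _), Finset.prod_mul_distrib]
  split_ifs <;> simp

section Contraction

variable {Y : ℕ → Matrix ι ι 𝕜} {j : ℕ → Option (Fin 3 × Fin 3)} {u v : ℕ → ι → 𝕜}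

lemma isBrokenProduct_brokenStep (hY : ∀ k, ‖Y k‖ ≤ 1) (hu : ∀ k i, ‖u k i‖ ≤ 1)
    (hv : ∀ k i, ‖v k i‖ ≤ 1) (k : ℕ) : IsBrokenProduct fun σ => brokenStep Y j u v σ k :=
  ((IsBrokenProduct.const (l2_opNorm_diagonal_le_one (hu k))).mul
    (isBrokenProduct_junction (j k))).mul
      (.const (l2_opNorm_mul_le_one (l2_opNorm_diagonal_le_one (hv k)) (hY k)))

lemma exists_list_prod_brokenStep_eq (hY : ∀ k, ‖Y k‖ ≤ 1) (hu : ∀ k i, ‖u k i‖ ≤ 1)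
    (hv : ∀ k i, ‖v k i‖ ≤ 1) {l : List ℕ} (hl : ∀ k ∈ l, j k = none) :
    ∃ Z : Matrix ι ι 𝕜, ‖Z‖ ≤ 1 ∧ ∀ σ, (l.map (brokenStep Y j u v σ)).prod = Z := by
  refine ⟨(l.map fun k => diagonal (u k) * (diagonal (v k) * Y k)).prod, ?_, fun σ => ?_⟩
  · refine (l2_opNorm_list_prod_le fun Z hZ => ?_).trans_eq (one_pow _)
    obtain ⟨k, -, rfl⟩ := List.mem_map.1 hZ
    exact l2_opNorm_mul_le_one (l2_opNorm_diagonal_le_one (hu k))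
      (l2_opNorm_mul_le_one (l2_opNorm_diagonal_le_one (hv k)) (hY k))
  · congr 1
    exact List.map_congr_left fun k hk => by simp [brokenStep, hl k hk, junction]

variable {M q₁ q₂ : ℕ}

/-- Only the behaviour between the first and the last visit to the special vertex `2`, at times
`q₁` and `q₂`, depends on the special vertices, so the sum is one over triangles. -/
lemma norm_sum_list_prod_brokenStep_le_card (hY : ∀ k, ‖Y k‖ ≤ 1) (hu : ∀ k i, ‖u k i‖ ≤ 1)
    (hv : ∀ k i, ‖v k i‖ ≤ 1) (hq : q₁ < q₂) (hq₂ : q₂ < M) (hj₁ : j q₁ = some (2, 2))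
    (hj₂ : j q₂ = some (2, 2)) (hinit : ∀ k < q₁, j k = none)
    (hfinal : ∀ k, q₂ < k → k < M → j k = none) {T : (Fin 3 → ι) → 𝕜}
    (hT : IsTriangleMultiplier T) :
    ‖∑ σ : Fin 3 → ι, T σ * ((List.range M).map (brokenStep Y j u v σ)).prod (σ 1) (σ 0)‖ ≤
      Fintype.card ι := by
  obtain ⟨A, hA, hGA⟩ := exists_list_prod_brokenStep_eq (j := j) (l := List.range' 0 q₁) hY hu hv
    fun k hk => hinit k (by rw [List.mem_range'_1] at hk; omega)
  obtain ⟨B, hB, hGB⟩ := exists_list_prod_brokenStep_eq (j := j)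
    (l := List.range' (q₂ + 1) (M - (q₂ + 1))) hY hu hv fun k hk => by
      rw [List.mem_range'_1] at hk
      exact hfinal k (by omega) (by omega)
  have hD₁ : ‖diagonal (v q₁) * Y q₁‖ ≤ 1 :=
    l2_opNorm_mul_le_one (l2_opNorm_diagonal_le_one (hv q₁)) (hY q₁)
  have hD₂ : ‖diagonal (v q₂) * Y q₂‖ ≤ 1 :=
    l2_opNorm_mul_le_one (l2_opNorm_diagonal_le_one (hv q₂)) (hY q₂)
  have hmid : IsBrokenProduct fun σ => diagonal (v q₁) * Y q₁ *
      ((List.range' (q₁ + 1) (q₂ - (q₁ + 1))).map (brokenStep Y j u v σ)).prod *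
        diagonal (u q₂) :=
    ((IsBrokenProduct.const hD₁).mul (.list_prod _ fun k _ =>
      isBrokenProduct_brokenStep hY hu hv k)).mul (.const (l2_opNorm_diagonal_le_one (hu q₂)))
  have hprod : ∀ σ, ((List.range M).map (brokenStep Y j u v σ)).prod =
      A * diagonal (u q₁) * single (σ 2) (σ 2) 1 * (diagonal (v q₁) * Y q₁ *
        ((List.range' (q₁ + 1) (q₂ - (q₁ + 1))).map (brokenStep Y j u v σ)).prod *
        diagonal (u q₂)) * (single (σ 2) (σ 2) 1 * (diagonal (v q₂) * Y q₂ * B)) := fun σ => by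
    have hsplit : ∀ q, j q = some (2, 2) → brokenStep Y j u v σ q =
        diagonal (u q) * single (σ 2) (σ 2) 1 * (diagonal (v q) * Y q) := fun q hq => by
      rw [brokenStep, hq, junction]
    rw [list_range_eq_append_cons_append_cons hq hq₂]
    simp only [List.map_append, List.map_cons, List.prod_append, List.prod_cons, hGA, hGB,
      hsplit q₁ hj₁, hsplit q₂ hj₂, mul_assoc]
  simp only [hprod]
  exact hmid.norm_sum_le_card hT (l2_opNorm_mul_le_one hA (l2_opNorm_diagonal_le_one (hu q₁)))
    (l2_opNorm_mul_le_one hD₂ hB)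

lemma weightedSumBound_brokenWalk (hY : ∀ k, ‖Y k‖ ≤ 1) (hq : q₁ < q₂) (hq₂ : q₂ < M)
    (hj₁ : j q₁ = some (2, 2)) (hj₂ : j q₂ = some (2, 2)) (hinit : ∀ k < q₁, j k = none)
    (hfinal : ∀ k, q₂ < k → k < M → j k = none) :
    WeightedSumBound (fun Ψ : Fin 3 ⊕ (Fin M ⊕ Fin M) → ι =>
      brokenWalk Y j (Ψ ∘ .inl) (Ψ ∘ .inr ∘ .inl) (Ψ ∘ .inr ∘ .inr)) (Fintype.card ι) :=
  fun W hW => by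
    let u : ℕ → ι → 𝕜 := fun k i => walkExt (fun k : Fin M => W (.inr (.inl k)) i) 1 k
    let v : ℕ → ι → 𝕜 := fun k i => walkExt (fun k : Fin M => W (.inr (.inr k)) i) 1 k
    have hu : ∀ k i, ‖u k i‖ ≤ 1 := fun k i => norm_walkExt_le (fun _ => hW _ i) norm_one.le k
    have hv : ∀ k i, ‖v k i‖ ≤ 1 := fun k i => norm_walkExt_le (fun _ => hW _ i) norm_one.le k
    have hT : IsTriangleMultiplier fun σ : Fin 3 → ι => ∏ a, W (.inl a) (σ a) :=
      .prod fun a _ => .weight (hW _) a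
    refine le_of_eq_of_le (congrArg norm ?_)
      (norm_sum_list_prod_brokenStep_le_card hY hu hv hq hq₂ hj₁ hj₂ hinit hfinal hT)
    simp only [← sum_brokenWalk_eq_list_prod, Finset.mul_sum, sum_sum_arrow, Fintype.prod_sum_type,
      Sum.elim_inl, Sum.elim_inr, u, v, walkExt_of_lt _ _ (Fin.is_lt _), mul_assoc]
    rfl

end Contraction

end BrokenWalk

section ClosedWalk

variable {ι κ : Type*}

lemma range_eq_range_fin_of_periodic {f : ℕ → ι} {M : ℕ} (hf : Function.Periodic f M) (hM : 0 < M) :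
    Set.range f = Set.range fun k : Fin M => f k := by
  refine Set.Subset.antisymm ?_ (Set.range_comp_subset_range Fin.val f)
  rintro _ ⟨k, rfl⟩
  exact ⟨⟨k % M, Nat.mod_lt k hM⟩, hf.map_mod_nat k⟩

variable [DecidableEq ι]

/-- The permutation of the vertices used for the letters of colour `a` when the vertex `v` is split:
it keeps `v` for the colour `ℓ` and moves it to the fresh vertex `y` for the other colours. -/
def splitPerm (ℓ : κ) (v y : ι) (a : κ) : Equiv.Perm ι :=
  if a = ℓ then 1 else Equiv.swap v y

/-- The special vertex taking the place of the split vertex for the letters of colour `a`. -/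
def splitIndex (ℓ a : κ) : Fin 3 :=
  if a = ℓ then 0 else 1

/-- The junction at time `k` of the walk `f` with colours `c` when the vertex `f 0` is split and the
vertex visited at the times `q₁` and `q₂` is made special. -/
def splitJunction (f : ℕ → ι) (c : ℕ → κ) (ℓ : κ) (q₁ q₂ k : ℕ) : Option (Fin 3 × Fin 3) :=
  if k = q₁ ∨ k = q₂ then some (2, 2)
  else if f k = f 0 ∧ c (k - 1) ≠ c k then some (splitIndex ℓ (c (k - 1)), splitIndex ℓ (c k))
  else none

lemma splitPerm_apply_of_ne {ℓ : κ} {v y x : ι} (hv : x ≠ v) (hy : x ≠ y) (a : κ) :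
    splitPerm ℓ v y a x = x := by
  unfold splitPerm
  split_ifs
  exacts [rfl, Equiv.swap_apply_of_ne_of_ne hv hy]

lemma splitPerm_apply_self (ℓ : κ) (v y z : ι) (a : κ) :
    splitPerm ℓ v y a v = ![v, y, z] (splitIndex ℓ a) := by
  unfold splitPerm splitIndex
  split_ifs
  exacts [rfl, Equiv.swap_apply_left v y]

lemma junction_splitJunction {𝕜 : Type*} [RCLike 𝕜] {f : ℕ → ι} {c : ℕ → κ} {ℓ : κ} {q₁ q₂ : ℕ}
    {y : ι} (hy : y ∉ Set.range f) (hne : f q₁ ≠ f 0) (heq : f q₂ = f q₁) (k : ℕ) :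
    junction (splitJunction f c ℓ q₁ q₂ k) ![f 0, y, f q₁]
      (splitPerm ℓ (f 0) y (c (k - 1)) (f k)) (splitPerm ℓ (f 0) y (c k) (f k)) = (1 : 𝕜) := by
  have hfy : ∀ k, f k ≠ y := fun k h => hy ⟨k, h⟩
  unfold splitJunction
  split_ifs with hq hk
  · have hfk : f k = f q₁ := by rcases hq with rfl | rfl <;> simp only [heq]
    rw [hfk, splitPerm_apply_of_ne hne (hfy q₁), splitPerm_apply_of_ne hne (hfy q₁)]
    exact single_apply_same _ _ _
  · rw [hk.1, splitPerm_apply_self ℓ _ _ (f q₁), splitPerm_apply_self ℓ _ _ (f q₁)]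
    exact single_apply_same _ _ _
  · have hsame : splitPerm ℓ (f 0) y (c (k - 1)) (f k) = splitPerm ℓ (f 0) y (c k) (f k) := by
      by_cases hfk : f k = f 0
      · rw [not_not.1 (not_and.1 hk hfk)]
      · rw [splitPerm_apply_of_ne hfk (hfy k), splitPerm_apply_of_ne hfk (hfy k)]
    rw [hsame]
    exact one_apply_eq _

/-- The special vertices, the points of arrival and the points of departure of the walk `f` with
colours `c` after its vertex `f 0` has been split into `f 0` and `y`. -/
def splitWalk (f : ℕ → ι) (c : ℕ → κ) (ℓ : κ) (y z : ι) (M : ℕ) : Fin 3 ⊕ (Fin M ⊕ Fin M) → ι :=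
  Sum.elim ![f 0, y, z] (Sum.elim (fun k => splitPerm ℓ (f 0) y (c (k - 1)) (f k))
    fun k => splitPerm ℓ (f 0) y (c k) (f k))

lemma ncard_range_succ_le_ncard_range_splitWalk {f : ℕ → ι} {M : ℕ} (hf : Function.Periodic f M)
    (hM : 0 < M) (c : ℕ → κ) (ℓ : κ) {y : ι} (z : ι) (hy : y ∉ Set.range f) :
    (Set.range f).ncard + 1 ≤ (Set.range (splitWalk f c ℓ y z M)).ncard := by
  have hfin : (Set.range f).Finite :=
    range_eq_range_fin_of_periodic hf hM ▸ Set.finite_range _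
  rw [← Set.ncard_insert_of_notMem hy hfin]
  refine Set.ncard_le_ncard ?_ (Set.finite_range _)
  rw [range_eq_range_fin_of_periodic hf hM, Set.insert_subset_iff]
  refine ⟨⟨.inl 1, rfl⟩, ?_⟩
  rintro _ ⟨k, rfl⟩
  by_cases hk : f k = f 0
  · exact ⟨.inl 0, hk.symm⟩
  · exact ⟨.inr (.inr k), splitPerm_apply_of_ne hk (fun h => hy ⟨k, h⟩) _⟩

open scoped Matrix.Norms.L2Operator

variable {𝕜 Ω : Type*} [RCLike 𝕜] [MeasurableSpace Ω] {μ : Measure Ω}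
  {Y : ℕ → Ω → Matrix ι ι 𝕜} {c : ℕ → κ} {f : ℕ → ι} {M q₁ q₂ : ℕ}

lemma integral_brokenWalk_eq_of_ker_eq [Finite ι]
    (hsym : ∀ τ : κ → Equiv.Perm ι,
      ∫ ω, ∏ k : Fin M, Y k ω (τ (c k) (f k)) (τ (c k) (f (k + 1))) ∂μ =
        ∫ ω, ∏ k : Fin M, Y k ω (f k) (f (k + 1)) ∂μ)
    (hf : f M = f 0) {ℓ : κ} (hc₀ : c 0 ≠ ℓ) (hcM : c (M - 1) = ℓ)
    (hne : f q₁ ≠ f 0) (heq : f q₂ = f q₁) {y : ι} (hy : y ∉ Set.range f) (hM : 0 < M)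
    {Ψ : Fin 3 ⊕ (Fin M ⊕ Fin M) → ι}
    (hΨ : Setoid.ker Ψ = Setoid.ker (splitWalk f c ℓ y (f q₁) M)) :
    ∫ ω, brokenWalk (fun k => Y k ω) (splitJunction f c ℓ q₁ q₂)
      (Ψ ∘ .inl) (Ψ ∘ .inr ∘ .inl) (Ψ ∘ .inr ∘ .inr) ∂μ =
      ∫ ω, ∏ k : Fin M, Y k ω (f k) (f (k + 1)) ∂μ := by
  obtain ⟨τ, rfl⟩ := exists_perm_comp_eq_of_ker_eq hΨ
  let σ : Fin 3 → ι := ![f 0, y, f q₁]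
  let r : Fin M → ι := fun k => splitPerm ℓ (f 0) y (c (k - 1)) (f k)
  let s : Fin M → ι := fun k => splitPerm ℓ (f 0) y (c k) (f k)
  have hr : ∀ k ≤ M, walkExt r (σ 0) k = splitPerm ℓ (f 0) y (c (k - 1)) (f k) := fun k hk => by
    rcases hk.lt_or_eq with h | rfl
    · exact walkExt_of_lt _ _ h
    · rw [walkExt_of_le _ _ le_rfl, hf, hcM, splitPerm, if_pos rfl]
      rfl
  have hr₀ : walkExt r (σ 0) 0 = σ 1 := by
    rw [hr 0 M.zero_le, splitPerm, if_neg hc₀]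
    exact Equiv.swap_apply_left _ _
  have hj : ∀ k : Fin M,
      junction (splitJunction f c ℓ q₁ q₂ k) σ (walkExt r (σ 0) k) (s k) = (1 : 𝕜) := fun k => by
    rw [hr k k.is_le']
    exact junction_splitJunction hy hne heq k
  rw [← hsym fun a => τ * splitPerm ℓ (f 0) y a]
  refine integral_congr_ae (ae_of_all _ fun ω => ?_)
  refine (brokenWalk_perm_comp (fun k => Y k ω) hr₀ hj τ).trans
    (Finset.prod_congr rfl fun k _ => ?_)
  simp only [hr (k + 1) k.is_lt, Nat.add_sub_cancel]
  rfl

variable [Fintype ι] [IsProbabilityMeasure μ]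

lemma norm_integral_closed_walk_mul_pow_le_of_norm_le_one
    (hYm : ∀ k x y, AEStronglyMeasurable (fun ω => Y k ω x y) μ)
    (hY : ∀ᵐ ω ∂μ, ∀ k, ‖Y k ω‖ ≤ 1)
    (hsym : ∀ τ : κ → Equiv.Perm ι,
      ∫ ω, ∏ k : Fin M, Y k ω (τ (c k) (f k)) (τ (c k) (f (k + 1))) ∂μ =
        ∫ ω, ∏ k : Fin M, Y k ω (f k) (f (k + 1)) ∂μ)
    (hf : Function.Periodic f M) (hc : c 0 ≠ c (M - 1)) (hq : q₁ < q₂) (hq₂ : q₂ < M)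
    (hne : f q₁ ≠ f 0) (heq : f q₂ = f q₁)
    (hinit : ∀ k, 0 < k → k < q₁ → f k = f 0 → c (k - 1) = c k)
    (hfinal : ∀ k, q₂ < k → k < M → f k = f 0 → c (k - 1) = c k)
    (hcard : 2 * (3 + 2 * M) ≤ Fintype.card ι) :
    ‖∫ ω, ∏ k : Fin M, Y k ω (f k) (f (k + 1)) ∂μ‖ * Fintype.card ι ^ (Set.range f).ncard ≤
      2 ^ ((3 + 2 * M) ^ 2 + (3 + 2 * M)) := by
  have hM : 0 < M := by omega
  obtain ⟨y, hy⟩ : ∃ y, y ∉ Set.range f := by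
    rw [range_eq_range_fin_of_periodic hf hM, ← Set.ne_univ_iff_exists_notMem]
    refine fun h => absurd (Fintype.card_le_of_surjective _ (Set.range_eq_univ.1 h)) ?_
    rw [Fintype.card_fin]
    omega
  let j := splitJunction f c (c (M - 1)) q₁ q₂
  have hj : ∀ k, k ≠ q₁ → k ≠ q₂ → (f k = f 0 → c (k - 1) = c k) → j k = none := fun k h₁ h₂ h => by
    simp only [j, splitJunction, h₁, h₂, or_self, if_false, ite_eq_right_iff, reduceCtorEq]
    exact fun h' => h'.2 (h h'.1)
  have hbound : ∀ᵐ ω ∂μ, WeightedSumBound (fun Ψ : Fin 3 ⊕ (Fin M ⊕ Fin M) → ι =>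
      brokenWalk (fun k => Y k ω) j (Ψ ∘ .inl) (Ψ ∘ .inr ∘ .inl) (Ψ ∘ .inr ∘ .inr))
      (Fintype.card ι) := by
    filter_upwards [hY] with ω hω
    refine weightedSumBound_brokenWalk hω hq hq₂ (if_pos (.inl rfl)) (if_pos (.inr rfl))
      (fun k hk => hj k hk.ne (hk.trans hq).ne fun h => ?_)
      fun k hk hkM => hj k (hq.trans hk).ne' hk.ne' (hfinal k hk hkM)
    rcases k.eq_zero_or_pos with rfl | hk₀
    exacts [rfl, hinit k hk₀ hk h]
  have hmeas : ∀ Ψ : Fin 3 ⊕ (Fin M ⊕ Fin M) → ι, AEStronglyMeasurable (fun ω =>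
      brokenWalk (fun k => Y k ω) j (Ψ ∘ .inl) (Ψ ∘ .inr ∘ .inl) (Ψ ∘ .inr ∘ .inr)) μ := fun Ψ => by
    unfold brokenWalk
    split_ifs
    · exact Finset.aestronglyMeasurable_fun_prod _ fun k _ => (hYm _ _ _).const_mul _
    · exact aestronglyMeasurable_const
  have hmain := WeightedSumBound.norm_integral_mul_pow_le hbound hmeas
    (fun Ψ => integral_brokenWalk_eq_of_ker_eq hsym hf.eq hc rfl hne heq hy hM)
    (by simpa [← two_mul] using hcard)
  simp only [Fintype.card_sum, Fintype.card_fin, ← two_mul] at hmain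
  have hι : (1 : ℝ) ≤ Fintype.card ι := by exact_mod_cast (by omega : 1 ≤ Fintype.card ι)
  refine le_of_mul_le_mul_right ?_ (zero_lt_one.trans_le hι)
  rw [mul_assoc, ← pow_succ]
  refine le_trans ?_ hmain
  gcongr
  exact ncard_range_succ_le_ncard_range_splitWalk hf hM c _ _ hy

lemma norm_integral_closed_walk_mul_pow_le {C : ℝ} (hC : 0 < C)
    (hYm : ∀ k x y, AEStronglyMeasurable (fun ω => Y k ω x y) μ)
    (hY : ∀ᵐ ω ∂μ, ∀ k, ‖Y k ω‖ ≤ C)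
    (hsym : ∀ τ : κ → Equiv.Perm ι,
      ∫ ω, ∏ k ∈ Finset.range M, Y k ω (τ (c k) (f k)) (τ (c k) (f (k + 1))) ∂μ =
        ∫ ω, ∏ k ∈ Finset.range M, Y k ω (f k) (f (k + 1)) ∂μ)
    (hf : Function.Periodic f M) (hc : c 0 ≠ c (M - 1)) (hq : q₁ < q₂) (hq₂ : q₂ < M)
    (hne : f q₁ ≠ f 0) (heq : f q₂ = f q₁)
    (hinit : ∀ k, 0 < k → k < q₁ → f k = f 0 → c (k - 1) = c k)
    (hfinal : ∀ k, q₂ < k → k < M → f k = f 0 → c (k - 1) = c k)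
    (hcard : 2 * (3 + 2 * M) ≤ Fintype.card ι) :
    ‖∫ ω, ∏ k ∈ Finset.range M, Y k ω (f k) (f (k + 1)) ∂μ‖ *
      Fintype.card ι ^ (Set.range f).ncard ≤ C ^ M * 2 ^ ((3 + 2 * M) ^ 2 + (3 + 2 * M)) := by
  have hnorm : ‖(C : 𝕜)⁻¹‖ = C⁻¹ := by rw [norm_inv, RCLike.norm_ofReal, abs_of_pos hC]
  have hZ : ∀ᵐ ω ∂μ, ∀ k, ‖((C : 𝕜)⁻¹ • Y k ω : Matrix ι ι 𝕜)‖ ≤ 1 := hY.mono fun ω h k => by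
    rw [norm_smul, hnorm, inv_mul_le_one₀ hC]
    exact h k
  have hint : ∀ ψ ψ' : ℕ → ι, ∫ ω, ∏ k : Fin M, (C : 𝕜)⁻¹ * Y k ω (ψ k) (ψ' k) ∂μ =
      ((C : 𝕜)⁻¹) ^ M * ∫ ω, ∏ k ∈ Finset.range M, Y k ω (ψ k) (ψ' k) ∂μ := fun ψ ψ' => by
    simp only [Finset.prod_mul_distrib, Finset.prod_const, Finset.card_univ, Fintype.card_fin,
      integral_const_mul, Finset.prod_range]
  have hmain := norm_integral_closed_walk_mul_pow_le_of_norm_le_one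
    (Y := fun k ω => (C : 𝕜)⁻¹ • Y k ω) (fun k x y => (hYm k x y).const_mul (C : 𝕜)⁻¹) hZ
    (fun τ => (hint (fun k => τ (c k) (f k)) fun k => τ (c k) (f (k + 1))).trans
      ((congrArg _ (hsym τ)).trans (hint f fun k => f (k + 1)).symm))
    hf hc hq hq₂ hne heq hinit hfinal hcard
  simp only [Matrix.smul_apply, smul_eq_mul] at hmain
  rw [hint f fun k => f (k + 1), norm_mul, norm_pow, hnorm, inv_pow, mul_assoc,
    inv_mul_le_iff₀ (pow_pos hC M)] at hmain
  exact hmain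

end ClosedWalk

section CenteredWalk

lemma prod_range_add_left_of_periodic {α : Type*} [CommMonoid α] {G : ℕ → α} {M : ℕ}
    (hG : Function.Periodic G M) (s : ℕ) :
    ∏ k ∈ Finset.range M, G (s + k) = ∏ k ∈ Finset.range M, G k := by
  calc ∏ k ∈ Finset.range M, G (s + k)
      = ∏ k ∈ Finset.Ico s (s + M), G (k % M) := by
        rw [Finset.prod_Ico_eq_prod_range, Nat.add_sub_cancel_left]
        exact Finset.prod_congr rfl fun k _ => (hG.map_mod_nat (s + k)).symm
    _ = ((Multiset.Ico s (s + M)).map fun k => G (k % M)).prod := rfl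
    _ = ((Multiset.range M).map G).prod := by
        rw [← Nat.multiset_Ico_map_mod s M, Multiset.map_map]
        rfl

lemma range_comp_add_left_of_periodic {α : Type*} {f : ℕ → α} {M : ℕ}
    (hf : Function.Periodic f M) (hM : 0 < M) (s : ℕ) :
    (Set.range fun k => f (s + k)) = Set.range f := by
  refine Set.Subset.antisymm (Set.range_comp_subset_range (s + ·) f) ?_
  rintro _ ⟨k, rfl⟩
  have hs : s ≤ k + s * M := (Nat.le_mul_of_pos_right s hM).trans (Nat.le_add_left _ k)
  exact ⟨k + s * M - s, (congrArg f (Nat.add_sub_cancel' hs)).trans (hf.nat_mul s k)⟩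

lemma pred_div_eq_div {d k : ℕ} (h : ¬d ∣ k) : (k - 1) / d = k / d := by
  rcases k with _ | k
  · exact absurd (dvd_zero d) h
  · rw [Nat.succ_div_of_not_dvd h, Nat.add_sub_cancel]

/-- Take a return `g a = g b` with `b - a` minimal. -/
lemma exists_eq_forall_between_ne_succ {α : Type*} {g : ℕ → α} {n : ℕ} (hn : 0 < n)
    (hclosed : g 0 = g n) (hg : ∀ a < n, g a ≠ g (a + 1)) :
    ∃ a b, a + 1 < b ∧ b ≤ n ∧ g a = g b ∧ ∀ j, a + 1 < j → j < b → g j ≠ g (a + 1) := by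
  have hex : ∃ m, 0 < m ∧ ∃ a, a + m ≤ n ∧ g a = g (a + m) :=
    ⟨n, hn, 0, by rw [zero_add], by rwa [zero_add]⟩
  obtain ⟨hm, a, ham, hga⟩ := Nat.find_spec hex
  have hm₁ : Nat.find hex ≠ 1 := fun h => hg a (by omega) (by rw [hga, h])
  refine ⟨a, a + Nat.find hex, by omega, ham, hga, fun j hj hjb hgj => ?_⟩
  refine Nat.find_min hex (m := j - (a + 1)) (by omega) ⟨by omega, a + 1, by omega, ?_⟩
  rw [← hgj, Nat.add_sub_cancel' hj.le]

open scoped Matrix.Norms.L2Operator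

variable {𝕜 ι κ Ω : Type*} [RCLike 𝕜] [Fintype ι] [DecidableEq ι] [MeasurableSpace Ω]
  {μ : Measure Ω} [IsProbabilityMeasure μ]

lemma norm_integral_closed_walk_mul_pow_le_of_origin {M q₁ q₂ : ℕ} {C : ℝ} (hC : 0 < C)
    {Y : ℕ → Ω → Matrix ι ι 𝕜} {c : ℕ → κ} {f : ℕ → ι}
    (hYm : ∀ k x y, AEStronglyMeasurable (fun ω => Y k ω x y) μ)
    (hY : ∀ᵐ ω ∂μ, ∀ k, ‖Y k ω‖ ≤ C)
    (hYper : Function.Periodic Y M) (hcper : Function.Periodic c M) (hf : Function.Periodic f M)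
    (hsym : ∀ τ : κ → Equiv.Perm ι,
      ∫ ω, ∏ k ∈ Finset.range M, Y k ω (τ (c k) (f k)) (τ (c k) (f (k + 1))) ∂μ =
        ∫ ω, ∏ k ∈ Finset.range M, Y k ω (f k) (f (k + 1)) ∂μ)
    (s : ℕ) (hc : c s ≠ c (s + (M - 1))) (hq : q₁ < q₂) (hq₂ : q₂ < M)
    (hne : f (s + q₁) ≠ f s) (heq : f (s + q₂) = f (s + q₁))
    (hinit : ∀ k, 0 < k → k < q₁ → f (s + k) = f s → c (s + (k - 1)) = c (s + k))
    (hfinal : ∀ k, q₂ < k → k < M → f (s + k) = f s → c (s + (k - 1)) = c (s + k))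
    (hcard : 2 * (3 + 2 * M) ≤ Fintype.card ι) :
    ‖∫ ω, ∏ k ∈ Finset.range M, Y k ω (f k) (f (k + 1)) ∂μ‖ *
      Fintype.card ι ^ (Set.range f).ncard ≤ C ^ M * 2 ^ ((3 + 2 * M) ^ 2 + (3 + 2 * M)) := by
  have hrot : ∀ τ : κ → Equiv.Perm ι,
      ∫ ω, ∏ k ∈ Finset.range M,
        Y (s + k) ω (τ (c (s + k)) (f (s + k))) (τ (c (s + k)) (f (s + k + 1))) ∂μ =
      ∫ ω, ∏ k ∈ Finset.range M, Y k ω (τ (c k) (f k)) (τ (c k) (f (k + 1))) ∂μ := fun τ => by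
    congr 1 with ω
    refine prod_range_add_left_of_periodic
      (G := fun k => Y k ω (τ (c k) (f k)) (τ (c k) (f (k + 1)))) (fun k => ?_) s
    simp only [hYper k, hcper k, hf k, add_right_comm k M 1, hf (k + 1)]
  have hshift := norm_integral_closed_walk_mul_pow_le (Y := fun k => Y (s + k))
    (f := fun k => f (s + k)) (c := fun k => c (s + k)) hC (fun k => hYm _)
    (hY.mono fun _ h k => h _)
    (fun τ => (hrot τ).trans ((hsym τ).trans ((hsym 1).symm.trans (hrot 1).symm)))
    (hf.const_add s) hc hq hq₂ hne heq hinit hfinal hcard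
  rw [range_comp_add_left_of_periodic hf (by omega) s] at hshift
  refine le_of_eq_of_le ?_ hshift
  rw [← hsym 1, ← hrot 1]
  rfl

/-- The walk is followed from the time `(a + 1) * d` on, where `a` and `b` are the ends of a
shortest return at multiples of `d`: its first letters then have the colour `ℓ (a + 1)`, its last
ones the colour `ℓ a`, and it visits the vertex `f (a * d)` at the times `(b - (a + 1)) * d` and
`2 * (n * d) - d`. -/
lemma norm_integral_centered_walk_mul_pow_le {n d : ℕ} (hn : 0 < n) (hd : 0 < d) {C : ℝ}
    (hC : 0 < C) {Y : ℕ → Ω → Matrix ι ι 𝕜} {ℓ : ℕ → κ} {f : ℕ → ι}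
    (hYm : ∀ k x y, AEStronglyMeasurable (fun ω => Y k ω x y) μ)
    (hY : ∀ᵐ ω ∂μ, ∀ k, ‖Y k ω‖ ≤ C) (hYper : Function.Periodic Y (2 * (n * d)))
    (hℓper : Function.Periodic ℓ n) (hℓ : ∀ a, a + 1 < n → ℓ a ≠ ℓ (a + 1))
    (hsym : ∀ τ : κ → Equiv.Perm ι,
      ∫ ω, ∏ k ∈ Finset.range (2 * (n * d)),
        Y k ω (τ (ℓ (k / d)) (f k)) (τ (ℓ (k / d)) (f (k + 1))) ∂μ =
      ∫ ω, ∏ k ∈ Finset.range (2 * (n * d)), Y k ω (f k) (f (k + 1)) ∂μ)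
    (hf : Function.Periodic f (2 * (n * d))) (hclosed : f 0 = f (n * d))
    (hcent : ∀ a < n, f (a * d) ≠ f ((a + 1) * d))
    (hcard : 2 * (3 + 2 * (2 * (n * d))) ≤ Fintype.card ι) :
    ‖∫ ω, ∏ k ∈ Finset.range (2 * (n * d)), Y k ω (f k) (f (k + 1)) ∂μ‖ *
        Fintype.card ι ^ (Set.range f).ncard ≤
      C ^ (2 * (n * d)) *
        2 ^ ((3 + 2 * (2 * (n * d))) ^ 2 + (3 + 2 * (2 * (n * d)))) := by
  obtain ⟨a, b, hab, hbn, hfab, hmin⟩ := exists_eq_forall_between_ne_succ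
    (g := fun a => f (a * d)) hn (by rwa [zero_mul]) hcent
  have hℓper₂ : Function.Periodic ℓ (2 * n) := hℓper.nsmul 2
  have hcper : Function.Periodic (fun k => ℓ (k / d)) (2 * (n * d)) := fun k =>
    (congrArg ℓ (by rw [← mul_assoc, Nat.add_mul_div_right _ _ hd])).trans (hℓper₂ (k / d))
  have hℓd : ∀ j i, i < d → ℓ ((j * d + i) / d) = ℓ j := fun j i hi => by
    rw [mul_comm, Nat.mul_add_div hd, Nat.div_eq_of_lt hi, add_zero]
  have hpure : ∀ k, 0 < k → ¬d ∣ k → ℓ (((a + 1) * d + (k - 1)) / d) = ℓ (((a + 1) * d + k) / d) :=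
    fun k hk hdk => by
      rw [← Nat.add_sub_assoc hk, pred_div_eq_div]
      rwa [Nat.dvd_add_right (Nat.dvd_mul_left _ _)]
  have hbd : b * d = (a + 1) * d + (b - (a + 1)) * d := by
    rw [← add_mul, Nat.add_sub_cancel' hab.le]
  have hbnd : b * d ≤ n * d := Nat.mul_le_mul_right d hbn
  have had : (a + 1) * d = a * d + d := Nat.succ_mul a d
  refine norm_integral_closed_walk_mul_pow_le_of_origin hC hYm hY hYper hcper hf hsym ((a + 1) * d)
    (q₁ := (b - (a + 1)) * d) (q₂ := 2 * (n * d) - d) ?_ ?_ ?_ ?_ ?_ (fun k hk₀ hk hfk => ?_)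
    (fun k hk hkM _ => ?_) hcard
  · have hlast : (a + 1) * d + (2 * (n * d) - 1) = (a + 2 * n) * d + (d - 1) := by
      rw [add_mul a (2 * n), mul_assoc]
      omega
    rw [hlast, hℓd _ _ (by omega), Nat.mul_div_cancel _ hd, hℓper₂ a]
    exact (hℓ a (by omega)).symm
  · omega
  · omega
  · rw [← hbd, ← hfab]
    exact hcent a (by omega)
  · rw [← hbd, ← hfab, ← hf (a * d)]
    congr 1
    omega
  · refine hpure k hk₀ ?_
    rintro ⟨j, rfl⟩
    rw [mul_comm d j] at hk hk₀ hfk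
    have hj := lt_of_mul_lt_mul_right hk (Nat.zero_le d)
    refine hmin (a + 1 + j) (by nlinarith) (by omega) ?_
    rwa [add_mul]
  · refine hpure k (by omega) fun hdk => ?_
    have hdM : d ∣ 2 * (n * d) - k := Nat.dvd_sub ((Nat.dvd_mul_left d n).mul_left 2) hdk
    have hle := Nat.le_of_dvd (by omega) hdM
    omega

end CenteredWalk

section Symmetry

variable {Ω K κ : Type} [MeasurableSpace Ω] {μ : Measure Ω} {N : ℕ}

/-- `g` builds a matrix out of a family of matrices measurably and compatibly with relabelling the
indices; this is what lets `g` inherit the symmetry of the family. -/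
structure IsEquivariant (g : (K → Fin N → Fin N → ℂ) → Matrix (Fin N) (Fin N) ℂ) : Prop where
  measurable : ∀ i j, Measurable fun B => g B i j
  apply_perm : ∀ (τ : Equiv.Perm (Fin N)) B i j,
    g B (τ i) (τ j) = g (fun k i j => B k (τ i) (τ j)) i j

namespace IsEquivariant

lemma one : IsEquivariant fun _ : K → Fin N → Fin N → ℂ => (1 : Matrix (Fin N) (Fin N) ℂ) where
  measurable _ _ := measurable_const
  apply_perm τ _ i j := by simp only [Matrix.one_apply, EmbeddingLike.apply_eq_iff_eq]

lemma eval (k : K) : IsEquivariant (N := N) fun B => Matrix.of (B k) where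
  measurable i j := (measurable_pi_apply j).comp
    ((measurable_pi_apply i).comp (measurable_pi_apply k))
  apply_perm _ _ _ _ := rfl

lemma map_star {g : (K → Fin N → Fin N → ℂ) → Matrix (Fin N) (Fin N) ℂ} (hg : IsEquivariant g) :
    IsEquivariant fun B => (g B).map star where
  measurable i j := continuous_star.measurable.comp (hg.measurable i j)
  apply_perm τ B i j := congrArg star (hg.apply_perm τ B i j)

end IsEquivariant

lemma comap_family_le_famSigma (A : K → Ω → Matrix (Fin N) (Fin N) ℂ) :
    MeasurableSpace.comap (fun ω k i j => A k ω i j) inferInstance ≤ famSigma A := by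
  simp only [MeasurableSpace.pi, MeasurableSpace.comap_iSup, MeasurableSpace.comap_comp]
  exact iSup_mono fun k => iSup_mono fun i => iSup_mono fun j => le_rfl

variable {A : κ → K → Ω → Matrix (Fin N) (Fin N) ℂ}

lemma iIndepFun_of_iIndep_famSigma (hindep : iIndep (fun ℓ => famSigma (A ℓ)) μ) :
    iIndepFun (fun ℓ ω k i j => A ℓ k ω i j) μ :=
  (iIndepFun_iff_iIndep _ _ _).2
    (iIndep_of_iIndep_of_le hindep fun ℓ => comap_family_le_famSigma (A ℓ))

lemma integral_prod_perm_eq_of_equivariant [Finite κ]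
    (hmeas : ∀ ℓ k, EntriesMeasurable (A ℓ k)) (hindep : iIndep (fun ℓ => famSigma (A ℓ)) μ)
    (hperm : ∀ ℓ, PermInvariant μ (A ℓ))
    {g : ℕ → (K → Fin N → Fin N → ℂ) → Matrix (Fin N) (Fin N) ℂ} (hg : ∀ k, IsEquivariant (g k))
    (s : Finset ℕ) (c : ℕ → κ) (ψ ψ' : ℕ → Fin N) (τ : κ → Equiv.Perm (Fin N)) :
    ∫ ω, ∏ k ∈ s, g k (fun a => A (c k) a ω) (τ (c k) (ψ k)) (τ (c k) (ψ' k)) ∂μ =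
      ∫ ω, ∏ k ∈ s, g k (fun a => A (c k) a ω) (ψ k) (ψ' k) ∂μ := by
  cases nonempty_fintype κ
  let H : Equiv.Perm (Fin N) → κ → (K → Fin N → Fin N → ℂ) → ℂ := fun σ ℓ B =>
    ∏ k ∈ s with c k = ℓ, g k B (σ (ψ k)) (σ (ψ' k))
  have hH : ∀ σ ℓ, Measurable (H σ ℓ) := fun σ ℓ =>
    Finset.measurable_prod _ fun k _ => (hg k).measurable _ _
  have hA : ∀ ℓ (σ : Equiv.Perm (Fin N)), Measurable fun ω a i j => A ℓ a ω (σ i) (σ j) :=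
    fun ℓ σ => measurable_pi_lambda _ fun a => measurable_pi_lambda _ fun i =>
      measurable_pi_lambda _ fun j => hmeas ℓ a _ _
  have hindepH : ∀ σ : κ → Equiv.Perm (Fin N),
      ∫ ω, ∏ k ∈ s, g k (fun a => A (c k) a ω) (σ (c k) (ψ k)) (σ (c k) (ψ' k)) ∂μ =
        ∏ ℓ, ∫ ω, H (σ ℓ) ℓ (fun a i j => A ℓ a ω i j) ∂μ := fun σ => by
    rw [← (iIndepFun_of_iIndep_famSigma hindep).integral_fun_prod_comp
      (fun ℓ => (hA ℓ 1).aemeasurable) fun ℓ => (hH (σ ℓ) ℓ).aestronglyMeasurable]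
    congr 1 with ω
    rw [← Finset.prod_fiberwise s c]
    refine Finset.prod_congr rfl fun ℓ _ => Finset.prod_congr rfl fun k hk => ?_
    rw [(Finset.mem_filter.1 hk).2]
  have hpermH : ∀ ℓ (σ : Equiv.Perm (Fin N)),
      ∫ ω, H σ ℓ (fun a i j => A ℓ a ω i j) ∂μ = ∫ ω, H 1 ℓ (fun a i j => A ℓ a ω i j) ∂μ :=
    fun ℓ σ => by
      have hH₁ : ∀ B, H σ ℓ B = H 1 ℓ fun a i j => B a (σ i) (σ j) := fun B =>
        Finset.prod_congr rfl fun k _ => (hg k).apply_perm σ B _ _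
      simp only [hH₁]
      rw [← integral_map (hA ℓ σ).aemeasurable (hH 1 ℓ).aestronglyMeasurable, hperm ℓ σ]
      exact integral_map (hA ℓ 1).aemeasurable (hH 1 ℓ).aestronglyMeasurable
  rw [hindepH τ, Finset.prod_congr rfl fun ℓ _ => hpermH ℓ (τ ℓ)]
  exact (hindepH 1).symm

end Symmetry

section Monomial

open scoped Matrix.Norms.L2Operator

lemma ofFn_coe_eq_map_range {α : Type*} (g : ℕ → α) (n : ℕ) :
    (List.ofFn fun j : Fin n => g j) = (List.range n).map g := by
  rw [List.ofFn_eq_map, ← List.map_coe_finRange_eq_range, List.map_map]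
  rfl

lemma mul_prod_range_map_mul {M : Type*} [Monoid M] (x y : ℕ → M) (e : ℕ) :
    x 0 * ((List.range e).map fun j => y j * x (j + 1)).prod =
      ((List.range e).map fun j => x j * y j).prod * x e := by
  induction e with
  | zero => simp
  | succ e ih => simp [List.range_succ, ← mul_assoc, ih]

variable {K : Type} {N : ℕ}

/-- The letter `X_k` for `some k` and the empty word for `none`, evaluated in the family `B`. -/
def evalLetter (o : Option K) (B : K → Matrix (Fin N) (Fin N) ℂ) : Matrix (Fin N) (Fin N) ℂ :=
  o.elim 1 B

lemma norm_evalLetter_le {o : Option K} {B : K → Matrix (Fin N) (Fin N) ℂ} {C : ℝ} (hC : 1 ≤ C)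
    (hB : ∀ k ∈ o, ‖B k‖ ≤ C) : ‖evalLetter o B‖ ≤ C := by
  cases o with
  | none => exact l2_opNorm_one_le.trans hC
  | some k => exact hB k rfl

lemma IsEquivariant.evalLetter (o : Option K) :
    IsEquivariant (N := N) fun B => evalLetter o fun k => Matrix.of (B k) := by
  cases o with
  | none => exact one
  | some k => exact eval k

/-- The letter in position `j` of a monomial of degree `dd`, continued by empty letters. -/
def paddedLetter (dd : ℕ) (kk : ℕ → K) (j : ℕ) : Option K :=
  if j < dd then some (kk (j + 1)) else none

/-- The diagonal of the coefficient in position `j` of a monomial of degree `dd`, continued by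
ones. -/
def paddedCoeff (dd : ℕ) (D : ℕ → Matrix (Fin N) (Fin N) ℂ) (j : ℕ) : Fin N → ℂ :=
  if j ≤ dd then (D j).diag else 1

lemma norm_paddedCoeff_le {dd : ℕ} {D : ℕ → Matrix (Fin N) (Fin N) ℂ} {C : ℝ} (hC : 1 ≤ C)
    (hD : ∀ j, ‖D j‖ ≤ C) (j : ℕ) (x : Fin N) : ‖paddedCoeff dd D j x‖ ≤ C := by
  unfold paddedCoeff
  split_ifs
  · exact (norm_entry_le_l2_opNorm (D j) x x).trans (hD j)
  · exact norm_one.trans_le hC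

/-- The weight of a walk in the path sum of a monomial padded to `d` letters: the product of its
coefficients along the walk. -/
def monomialWeight (d dd : ℕ) (D : ℕ → Matrix (Fin N) (Fin N) ℂ) (f : ℕ → Fin N) : ℂ :=
  ∏ j ∈ Finset.range d, paddedCoeff dd D j (f j)

lemma LocalTo.monomialWeight (d dd : ℕ) (D : ℕ → Matrix (Fin N) (Fin N) ℂ) :
    LocalTo d (monomialWeight d dd D) := fun _ _ h =>
  Finset.prod_congr rfl fun j hj => congrArg _ (h j (Finset.mem_range.1 hj).le)

lemma norm_monomialWeight_le {dd : ℕ} {D : ℕ → Matrix (Fin N) (Fin N) ℂ} {C : ℝ} (hC : 1 ≤ C)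
    (hD : ∀ j, ‖D j‖ ≤ C) (d : ℕ) (f : ℕ → Fin N) : ‖monomialWeight d dd D f‖ ≤ C ^ d := by
  rw [monomialWeight, norm_prod]
  exact (Finset.prod_le_prod (g := fun _ => C) (fun _ _ => norm_nonneg _)
    fun j _ => norm_paddedCoeff_le hC hD j (f j)).trans_eq
      (by rw [Finset.prod_const, Finset.card_range])

variable {A : K → Matrix (Fin N) (Fin N) ℂ} {dd d : ℕ} {kk : ℕ → K}
  {D : ℕ → Matrix (Fin N) (Fin N) ℂ}

lemma monomialEval_eq_list_prod (hD : ∀ j, (D j).IsDiag) (hdd : dd ≤ d) :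
    monomialEval A dd kk D = ((List.range (d + 1)).map fun j =>
      diagonal (paddedCoeff dd D j) * evalLetter (paddedLetter dd kk j) A).prod := by
  have hcoeff : ∀ j ≤ dd, diagonal (paddedCoeff dd D j) = D j := fun j hj => by
    rw [paddedCoeff, if_pos hj, (hD j).diagonal_diag]
  have hhead : ∀ j ∈ List.range dd, diagonal (paddedCoeff dd D j) *
      evalLetter (paddedLetter dd kk j) A = D j * A (kk (j + 1)) := fun j hj => by
    rw [hcoeff j (List.mem_range.1 hj).le, paddedLetter, if_pos (List.mem_range.1 hj)]
    rfl
  have hlast : diagonal (paddedCoeff dd D dd) * evalLetter (paddedLetter dd kk dd) A = D dd := by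
    rw [hcoeff dd le_rfl, paddedLetter, if_neg (lt_irrefl dd)]
    exact mul_one _
  have htail : ∀ j, diagonal (paddedCoeff dd D (dd + 1 + j)) *
      evalLetter (paddedLetter dd kk (dd + 1 + j)) A = 1 := fun j => by
    rw [paddedCoeff, if_neg (by omega), paddedLetter, if_neg (by omega)]
    exact (mul_one _).trans diagonal_one
  obtain ⟨e, rfl⟩ := Nat.exists_eq_add_of_le hdd
  rw [monomialEval, ofFn_coe_eq_map_range fun j => A (kk (j + 1)) * D (j + 1),
    mul_prod_range_map_mul D fun j => A (kk (j + 1)), Nat.add_right_comm, List.range_add,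
    List.map_append, List.prod_append, List.map_map, List.range_succ, List.map_append,
    List.prod_append, List.map_congr_left hhead, List.map_singleton, List.prod_singleton, hlast,
    List.prod_eq_one (l := List.map _ (List.range e)) (by simp [htail]), mul_one]

lemma IsPathSum.monomialEval (hD : ∀ j, (D j).IsDiag) (hdd : dd ≤ d) :
    IsPathSum (monomialEval A dd kk D) (d + 1) (monomialWeight (d + 1) dd D)
      fun j => _root_.evalLetter (paddedLetter dd kk j) A := by
  rw [monomialEval_eq_list_prod hD hdd]
  have h := list_prod (d := 1) (Y := fun j => _root_.evalLetter (paddedLetter dd kk j) A) (d + 1)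
    (fun j _ => diagonal_mul (paddedCoeff dd D j)) fun j _ f g h => congrArg _ (h 0 zero_le_one)
  simpa only [mul_one, add_zero] using! h

lemma norm_monomialEval_le {C C' : ℝ} (hC : 1 ≤ C) (hC' : 1 ≤ C') (hDdiag : ∀ j, (D j).IsDiag)
    (hD : ∀ j, ‖D j‖ ≤ C') (hdd : dd ≤ d)
    (hA : ∀ j, ∀ k ∈ paddedLetter dd kk j, ‖A k‖ ≤ C) :
    ‖monomialEval A dd kk D‖ ≤ (C' * C) ^ (d + 1) := by
  rw [monomialEval_eq_list_prod hDdiag hdd]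
  refine (l2_opNorm_list_prod_le (r := C' * C) ?_).trans_eq (by simp)
  simp only [List.forall_mem_map]
  intro j _
  have hcoeff : ‖(diagonal (paddedCoeff dd D j) : Matrix (Fin N) (Fin N) ℂ)‖ ≤ C' := by
    rw [l2_opNorm_diagonal, pi_norm_le_iff_of_nonneg (zero_le_one.trans hC')]
    exact norm_paddedCoeff_le hC' hD j
  exact (l2_opNorm_mul _ _).trans
    (mul_le_mul hcoeff (norm_evalLetter_le hC (hA j)) (norm_nonneg _) (zero_le_one.trans hC'))

end Monomial

section CenteredWeight

variable {α R : Type*}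

namespace LocalTo

variable {m m' : ℕ} {w : (ℕ → α) → R}

lemma comp_add_left (hw : LocalTo m w) (b : ℕ) :
    LocalTo (b + m) fun f => w fun j => f (b + j) := fun _ _ h =>
  hw _ _ fun k hk => h (b + k) (Nat.add_le_add_left hk b)

lemma mono (hw : LocalTo m w) (h : m ≤ m') : LocalTo m' w := fun _ _ hfg =>
  hw _ _ fun k hk => hfg k (hk.trans h)

lemma mul_star_comp_add_left [Mul R] [Star R] (hw : LocalTo m w) :
    LocalTo (2 * m) fun f => w f * star (w fun j => f (m + j)) := fun f g h =>
  congrArg₂ (fun x y => x * star y) (hw.mono (Nat.le_mul_of_pos_left m two_pos) f g h)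
    (hw.comp_add_left m f g fun k hk => h k (hk.trans_eq (two_mul m).symm))

lemma ite_eq [Zero R] [DecidableEq α] (hw : LocalTo m w) :
    LocalTo m fun f => if f 0 = f m then 0 else w f := fun f g h => by
  simp only [h 0 (Nat.zero_le m), h m le_rfl, hw f g h]

end LocalTo

/-- The weight of a walk in the path sum of the diagonal of a product of `n` centered factors, the
`a`-th of which is a path sum over walks of length `d` with weight `w a`. -/
def centeredWeight [CommSemiring R] [DecidableEq α] (n d : ℕ) (w : ℕ → (ℕ → α) → R)
    (f : ℕ → α) : R :=
  if f 0 = f (n * d) then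
    ∏ a ∈ Finset.range n, if f (a * d) = f (a * d + d) then 0 else w a fun j => f (a * d + j)
  else 0

section

variable [CommSemiring R] [DecidableEq α] {n d : ℕ} {w : ℕ → (ℕ → α) → R}

lemma LocalTo.centeredWeight (hw : ∀ a < n, LocalTo d (w a)) :
    LocalTo (n * d) (centeredWeight n d w) := fun f g h => by
  have hprod : ∀ a ∈ Finset.range n,
      (if f (a * d) = f (a * d + d) then 0 else w a fun j => f (a * d + j)) =
        if g (a * d) = g (a * d + d) then 0 else w a fun j => g (a * d + j) := fun a ha => by
    rw [Finset.mem_range] at ha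
    refine (hw a ha).ite_eq.comp_add_left (a * d) f g fun k hk => h k (hk.trans ?_)
    rw [← Nat.succ_mul]
    exact Nat.mul_le_mul_right d ha
  unfold _root_.centeredWeight
  rw [h 0 (Nat.zero_le _), h _ le_rfl, Finset.prod_congr rfl hprod]

lemma eq_and_forall_ne_of_centeredWeight_ne_zero [NoZeroDivisors R] [Nontrivial R] {f : ℕ → α}
    (hf : centeredWeight n d w f ≠ 0) :
    f 0 = f (n * d) ∧ ∀ a < n, f (a * d) ≠ f ((a + 1) * d) := by
  obtain ⟨hclosed, hprod⟩ := ite_ne_right_iff.1 hf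
  refine ⟨hclosed, fun a ha => ?_⟩
  rw [Nat.succ_mul]
  exact (ite_ne_left_iff.1 (Finset.prod_ne_zero_iff.1 hprod a (Finset.mem_range.2 ha))).1

end

lemma norm_centeredWeight_le [NormedField R] [DecidableEq α] {n d : ℕ} {w : ℕ → (ℕ → α) → R}
    {r : ℝ} (hr : 0 ≤ r) (hw : ∀ a f, ‖w a f‖ ≤ r) (f : ℕ → α) :
    ‖centeredWeight n d w f‖ ≤ r ^ n := by
  unfold centeredWeight
  split_ifs
  · rw [norm_prod]
    refine (Finset.prod_le_prod (g := fun _ => r) (fun _ _ => norm_nonneg _)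
      fun a _ => ?_).trans_eq (by rw [Finset.prod_const, Finset.card_range])
    split_ifs
    exacts [norm_zero.trans_le hr, hw a _]
  · exact norm_zero.trans_le (pow_nonneg hr n)

lemma IsPathSum.dproj_centeredProd {N n d : ℕ} {M : ℕ → Matrix (Fin N) (Fin N) ℂ}
    {w : ℕ → (ℕ → Fin N) → ℂ} {Y : ℕ → Matrix (Fin N) (Fin N) ℂ}
    (hM : ∀ a < n, IsPathSum (M a) d (w a) fun k => Y (a * d + k))
    (hw : ∀ a < n, LocalTo d (w a)) :
    IsPathSum (_root_.dproj (centeredProd fun a : Fin n => M a)) (n * d)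
      (centeredWeight n d w) Y := by
  rw [centeredProd, ofFn_coe_eq_map_range fun a => M a - _root_.dproj (M a)]
  exact (list_prod n (fun a ha => (hM a ha).sub_dproj) fun a ha => (hw a ha).ite_eq).dproj

end CenteredWeight

section Counting

variable {ι : Type*} [Fintype ι]

lemma sum_inv_card_pow_card_insert_le (S : Finset ι) :
    ∑ a, ((Fintype.card ι : ℝ) ^ (insert a S).card)⁻¹ ≤
      (S.card + 1) * ((Fintype.card ι : ℝ) ^ S.card)⁻¹ := by
  have hmem : ∑ a ∈ S, ((Fintype.card ι : ℝ) ^ (insert a S).card)⁻¹ =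
      S.card * ((Fintype.card ι : ℝ) ^ S.card)⁻¹ := by
    rw [Finset.sum_congr rfl fun a ha => by rw [Finset.insert_eq_of_mem ha], Finset.sum_const,
      nsmul_eq_mul]
  have hcompl : ∑ a ∈ Sᶜ, ((Fintype.card ι : ℝ) ^ (insert a S).card)⁻¹ ≤
      ((Fintype.card ι : ℝ) ^ S.card)⁻¹ := by
    rw [Finset.sum_congr rfl fun a ha => by
      rw [Finset.card_insert_of_notMem (Finset.mem_compl.1 ha)], Finset.sum_const, nsmul_eq_mul,
      pow_succ', mul_inv, ← mul_assoc, ← div_eq_mul_inv]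
    refine mul_le_of_le_one_left (by positivity) (div_le_one_of_le₀ ?_ (Nat.cast_nonneg _))
    exact_mod_cast Finset.card_le_univ Sᶜ
  rw [← Finset.sum_add_sum_compl S, hmem, add_one_mul]
  exact add_le_add_right hcompl _

lemma sum_inv_card_pow_ncard_range_le (m : ℕ) :
    ∑ φ : Fin m → ι, ((Fintype.card ι : ℝ) ^ (Set.range φ).ncard)⁻¹ ≤ m.factorial := by
  induction m with
  | zero => simp
  | succ m ih =>
    rw [← (Fin.consEquiv fun _ => ι).sum_comp, Fintype.sum_prod_type_right]
    have hcons : ∀ (φ : Fin m → ι) a,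
        (Set.range (Fin.consEquiv (fun _ => ι) (a, φ))).ncard =
          (insert a (Finset.univ.image φ)).card := fun φ a => by
      rw [← Set.ncard_coe_finset]
      simp [Fin.consEquiv, Fin.range_cons]
    have hcard : ∀ φ : Fin m → ι, (Set.range φ).ncard = (Finset.univ.image φ).card := fun φ => by
      rw [← Set.ncard_coe_finset]
      simp
    simp only [hcons, hcard] at ih ⊢
    calc _ ≤ ∑ φ : Fin m → ι, ((m : ℝ) + 1) *
          ((Fintype.card ι : ℝ) ^ (Finset.univ.image φ).card)⁻¹ := by
          refine Finset.sum_le_sum fun φ _ => (sum_inv_card_pow_card_insert_le _).trans ?_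
          gcongr
          exact Finset.card_image_le.trans_eq (Finset.card_fin m)
      _ ≤ _ := by
          rw [← Finset.mul_sum, Nat.factorial_succ]
          push_cast
          gcongr

end Counting

section IntegralPathSum

open scoped Matrix.Norms.L2Operator

variable {ι 𝕜 Ω : Type*} [Fintype ι] [DecidableEq ι] [RCLike 𝕜] [MeasurableSpace Ω]
  {μ : Measure Ω} {Y : ℕ → Ω → Matrix ι ι 𝕜}

lemma integrable_prod_entries [IsFiniteMeasure μ]
    (hYm : ∀ k x y, AEStronglyMeasurable (fun ω => Y k ω x y) μ)
    {C : ℝ} (hY : ∀ᵐ ω ∂μ, ∀ k, ‖Y k ω‖ ≤ C) (s : Finset ℕ) (f : ℕ → ι) :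
    Integrable (fun ω => ∏ k ∈ s, Y k ω (f k) (f (k + 1))) μ := by
  refine .of_bound (Finset.aestronglyMeasurable_fun_prod _ fun k _ => hYm k _ _) (C ^ s.card) ?_
  filter_upwards [hY] with ω hω
  rw [norm_prod, ← Finset.prod_const]
  exact Finset.prod_le_prod (fun _ _ => norm_nonneg _) fun k _ =>
    (norm_entry_le_l2_opNorm _ _ _).trans (hω k)

variable {P : Ω → Matrix ι ι 𝕜} {m : ℕ} [NeZero m] {w : (ℕ → ι) → 𝕜}

lemma integrable_trace_of_isPathSum (hP : ∀ ω, IsPathSum (P ω) m w fun k => Y k ω)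
    (hw : LocalTo m w)
    (hint : ∀ f : ℕ → ι, Integrable (fun ω => ∏ k ∈ Finset.range m, Y k ω (f k) (f (k + 1))) μ) :
    Integrable (fun ω => (P ω).trace) μ := by
  simp only [(hP _).trace_eq hw]
  exact integrable_finsetSum _ fun φ _ => (hint _).const_mul _

lemma norm_integral_trace_le_of_isPathSum (hP : ∀ ω, IsPathSum (P ω) m w fun k => Y k ω)
    (hw : LocalTo m w)
    (hint : ∀ f : ℕ → ι, Integrable (fun ω => ∏ k ∈ Finset.range m, Y k ω (f k) (f (k + 1))) μ)
    {r B : ℝ} (hr₀ : 0 ≤ r) (hr : ∀ f, ‖w f‖ ≤ r) (hB₀ : 0 ≤ B)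
    (hB : ∀ f : ℕ → ι, Function.Periodic f m → w f ≠ 0 →
      ‖∫ ω, ∏ k ∈ Finset.range m, Y k ω (f k) (f (k + 1)) ∂μ‖ *
        Fintype.card ι ^ (Set.range f).ncard ≤ B) :
    ‖∫ ω, (P ω).trace ∂μ‖ ≤ r * B * m.factorial := by
  simp only [(hP _).trace_eq hw]
  rw [integral_finsetSum _ fun φ _ => (hint _).const_mul _]
  refine (norm_sum_le_of_le (f := fun φ : Fin m → ι => _)
    (n := fun φ => r * B * ((Fintype.card ι : ℝ) ^ (Set.range φ).ncard)⁻¹) _ fun φ _ => ?_).trans ?_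
  · rw [integral_const_mul, norm_mul, mul_assoc]
    by_cases hφ : w (cyclicWalk φ) = 0
    · rw [hφ, norm_zero, zero_mul]
      positivity
    have hcard : 0 < (Fintype.card ι : ℝ) ^ (Set.range φ).ncard :=
      pow_pos (Nat.cast_pos.2 (Fintype.card_pos_iff.2 ⟨φ 0⟩)) _
    refine mul_le_mul (hr _) ?_ (norm_nonneg _) hr₀
    rw [← div_eq_mul_inv, le_div_iff₀ hcard, ← range_cyclicWalk φ]
    exact hB _ (cyclicWalk_periodic φ) hφ
  · rw [← Finset.mul_sum]
    exact mul_le_mul_of_nonneg_left (sum_inv_card_pow_ncard_range_le m) (mul_nonneg hr₀ hB₀)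

end IntegralPathSum

section Word

open scoped Matrix.Norms.L2Operator

/-- The sequence which agrees with `g` and with `h` alternately on blocks of length `m`. -/
def alternating {α : Type*} (m : ℕ) (g h : ℕ → α) (k : ℕ) : α :=
  if Even (k / m) then g k else h k

lemma alternating_periodic {α : Type*} {m : ℕ} (hm : 0 < m) {g h : ℕ → α}
    (hg : Function.Periodic g m) (hh : Function.Periodic h m) :
    Function.Periodic (alternating m g h) (2 * m) := fun k => by
  have hg₂ : g (k + 2 * m) = g k := hg.nsmul 2 k
  have hh₂ : h (k + 2 * m) = h k := hh.nsmul 2 k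
  rw [alternating, alternating, Nat.add_mul_div_right k 2 hm, hg₂, hh₂]
  simp only [Nat.even_add, even_two, iff_true]

lemma alternating_of_lt {α : Type*} {m k : ℕ} (hk : k < m) (g h : ℕ → α) :
    alternating m g h k = g k := by
  rw [alternating, Nat.div_eq_of_lt hk, if_pos Even.zero]

lemma alternating_add_of_lt {α : Type*} {m k : ℕ} (hk : k < m) (g h : ℕ → α) :
    alternating m g h (m + k) = h (m + k) := by
  rw [alternating, Nat.add_div_left k (Nat.zero_lt_of_lt hk), Nat.div_eq_of_lt hk,
    if_neg (by decide)]

variable {Ω K κ : Type} {n d N : ℕ} [NeZero n]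

/-- The `k`-th letter of the word obtained by concatenating `n` monomials, each padded to `d`
letters, and repeating the result. -/
def wordLetter (d : ℕ) (dv : Fin n → ℕ) (kv : Fin n → ℕ → K) (k : ℕ) : Option K :=
  paddedLetter (cyclicWalk dv (k / d)) (cyclicWalk kv (k / d)) (k % d)

/-- The matrix of the `k`-th letter in the word for `ε ε*`, where `ε` is the diagonal of the
centered product; since `ε` is diagonal, the letters of `ε*` may be taken in the same order as
those of `ε`, conjugated entrywise. -/
def wordMatrix (d : ℕ) (dv : Fin n → ℕ) (kv : Fin n → ℕ → K) :
    ℕ → (K → Fin N → Fin N → ℂ) → Matrix (Fin N) (Fin N) ℂ :=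
  alternating (n * d) (fun k B => evalLetter (wordLetter d dv kv k) fun a => Matrix.of (B a))
    fun k B => (evalLetter (wordLetter d dv kv k) fun a => Matrix.of (B a)).map star

variable {dv : Fin n → ℕ} {kv : Fin n → ℕ → K}

lemma cyclicWalk_add_mul_div {α : Type*} (φ : Fin n → α) (hd : 0 < d) (k : ℕ) :
    cyclicWalk φ ((k + n * d) / d) = cyclicWalk φ (k / d) := by
  rw [Nat.add_mul_div_right k n hd, cyclicWalk_periodic φ]

lemma wordLetter_periodic (hd : 0 < d) : Function.Periodic (wordLetter d dv kv) (n * d) :=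
  fun k => by
    rw [wordLetter, wordLetter, Nat.add_mul_mod_self_right, cyclicWalk_add_mul_div dv hd,
      cyclicWalk_add_mul_div kv hd]

lemma wordLetter_mul_add {a k : ℕ} (hk : k < d) :
    wordLetter d dv kv (a * d + k) = paddedLetter (cyclicWalk dv a) (cyclicWalk kv a) k := by
  rw [wordLetter, Nat.mul_comm a d, Nat.mul_add_div (Nat.zero_lt_of_lt hk), Nat.mul_add_mod,
    Nat.div_eq_of_lt hk, Nat.mod_eq_of_lt hk, add_zero]

lemma wordMatrix_periodic (hd : 0 < d) :
    Function.Periodic (wordMatrix (N := N) d dv kv) (2 * (n * d)) :=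
  alternating_periodic (Nat.mul_pos (NeZero.pos n) hd)
    (fun k => by simp only [wordLetter_periodic hd k])
    fun k => by simp only [wordLetter_periodic hd k]

lemma isEquivariant_wordMatrix (k : ℕ) : IsEquivariant (wordMatrix (N := N) d dv kv k) := by
  unfold wordMatrix alternating
  split_ifs
  exacts [.evalLetter _, (IsEquivariant.evalLetter _).map_star]

lemma norm_wordMatrix_le {B : K → Matrix (Fin N) (Fin N) ℂ} {C : ℝ} (hC : 1 ≤ C) {k : ℕ}
    (hB : ∀ a ∈ wordLetter d dv kv k, ‖B a‖ ≤ C) : ‖wordMatrix d dv kv k B‖ ≤ C := by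
  unfold wordMatrix alternating
  split_ifs
  exacts [norm_evalLetter_le hC hB, (l2_opNorm_map_star _).trans_le (norm_evalLetter_le hC hB)]

end Word

section CenteredMonomials

open scoped Matrix.Norms.L2Operator

variable {Ω K κ : Type} {n d N : ℕ} [NeZero n] {ℓv : Fin n → κ} {dv : Fin n → ℕ}
  {kv : Fin n → ℕ → K} {D : Fin n → ℕ → Matrix (Fin N) (Fin N) ℂ}

/-- The diagonal of the product of the centered monomials, denoted `ε_N` in the theorem. -/
def centeredMonomialDiag (A : κ → K → Matrix (Fin N) (Fin N) ℂ) (ℓv : Fin n → κ) (dv : Fin n → ℕ)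
    (kv : Fin n → ℕ → K) (D : Fin n → ℕ → Matrix (Fin N) (Fin N) ℂ) :
    Matrix (Fin N) (Fin N) ℂ :=
  dproj (centeredProd fun i => monomialEval (A (ℓv i)) (dv i) (kv i) (D i))

/-- The weight of a walk in the path sum of `centeredMonomialDiag`. -/
def centeredMonomialWeight (d : ℕ) (dv : Fin n → ℕ)
    (D : Fin n → ℕ → Matrix (Fin N) (Fin N) ℂ) : (ℕ → Fin N) → ℂ :=
  centeredWeight n d fun a => monomialWeight d (cyclicWalk dv a) (cyclicWalk D a)

lemma LocalTo.centeredMonomialWeight :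
    LocalTo (n * d) (centeredMonomialWeight d dv D) :=
  .centeredWeight fun _ _ => .monomialWeight _ _ _

lemma isPathSum_centeredMonomialDiag (A : κ → K → Matrix (Fin N) (Fin N) ℂ)
    (hD : ∀ i j, (D i j).IsDiag) (hdv : ∀ i, dv i ≤ d) :
    IsPathSum (centeredMonomialDiag A ℓv dv kv D) (n * (d + 1))
      (centeredMonomialWeight (d + 1) dv D)
      fun k => wordMatrix (d + 1) dv kv k (A (cyclicWalk ℓv (k / (d + 1)))) := by
  have h := IsPathSum.dproj_centeredProd (n := n) (d := d + 1)
    (M := fun a => monomialEval (A (cyclicWalk ℓv a)) (cyclicWalk dv a) (cyclicWalk kv a)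
      (cyclicWalk D a))
    (w := fun a => monomialWeight (d + 1) (cyclicWalk dv a) (cyclicWalk D a))
    (Y := fun k => wordMatrix (d + 1) dv kv k (A (cyclicWalk ℓv (k / (d + 1)))))
    (fun a ha => (IsPathSum.monomialEval (hD _) (hdv _)).congr (fun _ => rfl) fun k hk => ?_)
    fun _ _ => .monomialWeight _ _ _
  · simpa only [cyclicWalk, Fin.ofNat_val_eq_self] using! h
  · have hak : a * (d + 1) + k < n * (d + 1) := by nlinarith
    have hdiv : (a * (d + 1) + k) / (d + 1) = a := by
      rw [mul_comm, Nat.mul_add_div d.succ_pos, Nat.div_eq_of_lt hk, add_zero]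
    rw [wordMatrix, alternating_of_lt hak, wordLetter_mul_add hk, hdiv]
    rfl

lemma isPathSum_centeredMonomialDiag_mul_map_star (A : κ → K → Matrix (Fin N) (Fin N) ℂ)
    (hD : ∀ i j, (D i j).IsDiag) (hdv : ∀ i, dv i ≤ d) :
    IsPathSum (centeredMonomialDiag A ℓv dv kv D * (centeredMonomialDiag A ℓv dv kv D).map star)
      (2 * (n * (d + 1)))
      (fun f => centeredMonomialWeight (d + 1) dv D f *
        star (centeredMonomialWeight (d + 1) dv D fun j => f (n * (d + 1) + j)))
      fun k => wordMatrix (d + 1) dv kv k (A (cyclicWalk ℓv (k / (d + 1)))) := by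
  refine (isPathSum_centeredMonomialDiag A hD hdv).mul_map_star .centeredMonomialWeight
    fun k hk => ?_
  rw [wordMatrix, alternating_add_of_lt hk, alternating_of_lt hk, Nat.add_comm _ k,
    wordLetter_periodic d.succ_pos, cyclicWalk_add_mul_div ℓv d.succ_pos]

lemma norm_centeredMonomialWeight_le {C : ℝ} (hC : 1 ≤ C) (hD : ∀ i j, ‖D i j‖ ≤ C) (d : ℕ)
    (f : ℕ → Fin N) : ‖centeredMonomialWeight d dv D f‖ ≤ (C ^ d) ^ n :=
  norm_centeredWeight_le (pow_nonneg (zero_le_one.trans hC) d)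
    (fun _ => norm_monomialWeight_le hC (hD _) d) f

variable [MeasurableSpace Ω] {μ : Measure Ω} {A : κ → K → Ω → Matrix (Fin N) (Fin N) ℂ}

lemma aestronglyMeasurable_wordMatrix (hmeas : ∀ ℓ k, EntriesMeasurable (A ℓ k)) (k : ℕ) (ℓ : κ)
    (x y : Fin N) :
    AEStronglyMeasurable (fun ω => wordMatrix d dv kv k (fun a => A ℓ a ω) x y) μ :=
  ((isEquivariant_wordMatrix k).measurable x y |>.comp <| measurable_pi_lambda _ fun a =>
    measurable_pi_lambda _ fun i => measurable_pi_lambda _ fun j =>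
      hmeas ℓ a i j).aestronglyMeasurable

lemma norm_integral_prod_wordMatrix_mul_pow_le [IsProbabilityMeasure μ] [Finite κ]
    (hmeas : ∀ ℓ k, EntriesMeasurable (A ℓ k)) (hindep : iIndep (fun ℓ => famSigma (A ℓ)) μ)
    (hperm : ∀ ℓ, PermInvariant μ (A ℓ)) (hd : 0 < d) {C : ℝ} (hC : 1 ≤ C)
    (hA : ∀ᵐ ω ∂μ, ∀ i j, ∀ a ∈ paddedLetter (dv i) (kv i) j, ‖A (ℓv i) a ω‖ ≤ C)
    (hℓ : ∀ (i : ℕ) (h : i + 1 < n), ℓv ⟨i, Nat.lt_of_succ_lt h⟩ ≠ ℓv ⟨i + 1, h⟩)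
    {f : ℕ → Fin N} (hf : Function.Periodic f (2 * (n * d))) (hclosed : f 0 = f (n * d))
    (hcent : ∀ a < n, f (a * d) ≠ f ((a + 1) * d))
    (hcard : 2 * (3 + 2 * (2 * (n * d))) ≤ N) :
    ‖∫ ω, ∏ k ∈ Finset.range (2 * (n * d)),
        wordMatrix d dv kv k (fun a => A (cyclicWalk ℓv (k / d)) a ω) (f k) (f (k + 1)) ∂μ‖ *
        N ^ (Set.range f).ncard ≤
      C ^ (2 * (n * d)) * 2 ^ ((3 + 2 * (2 * (n * d))) ^ 2 + (3 + 2 * (2 * (n * d)))) := by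
  have hYper : Function.Periodic (fun k ω => wordMatrix (N := N) d dv kv k
      fun a => A (cyclicWalk ℓv (k / d)) a ω) (2 * (n * d)) := fun k => by
    have hcolor : cyclicWalk ℓv ((k + 2 * (n * d)) / d) = cyclicWalk ℓv (k / d) :=
      Function.Periodic.nsmul (f := fun k => cyclicWalk ℓv (k / d))
        (cyclicWalk_add_mul_div ℓv hd) 2 k
    simp only [hcolor, wordMatrix_periodic hd k]
  have hadj : ∀ a, a + 1 < n → cyclicWalk ℓv a ≠ cyclicWalk ℓv (a + 1) := fun a ha => by
    rw [cyclicWalk_of_lt ℓv (Nat.lt_of_succ_lt ha), cyclicWalk_of_lt ℓv ha]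
    exact hℓ a ha
  simpa only [Fintype.card_fin] using! norm_integral_centered_walk_mul_pow_le (NeZero.pos n) hd
    (zero_lt_one.trans_le hC) (fun k => aestronglyMeasurable_wordMatrix hmeas k _)
    (hA.mono fun ω hω k => norm_wordMatrix_le hC (hω _ _)) hYper (cyclicWalk_periodic ℓv) hadj
    (integral_prod_perm_eq_of_equivariant hmeas hindep hperm isEquivariant_wordMatrix _
      (fun k => cyclicWalk ℓv (k / d)) f fun k => f (k + 1)) hf hclosed hcent
    (by rwa [Fintype.card_fin])

end CenteredMonomials

section DiagonalProjection

open scoped Matrix.Norms.L2Operator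

variable {N : ℕ}

lemma dproj_eq_diagonal (A : Matrix (Fin N) (Fin N) ℂ) : dproj A = diagonal A.diag := by
  ext i j
  by_cases h : i = j <;> simp [dproj, h]

lemma conjTranspose_dproj (A : Matrix (Fin N) (Fin N) ℂ) : (dproj A)ᴴ = (dproj A).map star := by
  rw [dproj_eq_diagonal, diagonal_conjTranspose, diagonal_map (star_zero ℂ)]
  rfl

lemma norm_dproj_le (A : Matrix (Fin N) (Fin N) ℂ) : ‖dproj A‖ ≤ ‖A‖ := by
  rw [dproj_eq_diagonal, l2_opNorm_diagonal, pi_norm_le_iff_of_nonneg (norm_nonneg A)]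
  exact fun i => norm_entry_le_l2_opNorm A i i

lemma norm_centeredProd_le {n : ℕ} {M : Fin n → Matrix (Fin N) (Fin N) ℂ} {r : ℝ}
    (hM : ∀ i, ‖M i‖ ≤ r) : ‖centeredProd M‖ ≤ (2 * r) ^ n := by
  refine (l2_opNorm_list_prod_le (r := 2 * r) ?_).trans_eq (by rw [List.length_ofFn])
  rw [List.forall_mem_ofFn_iff]
  intro i
  rw [two_mul]
  exact (norm_sub_le _ _).trans (add_le_add (hM i) ((norm_dproj_le _).trans (hM i)))

lemma trace_dproj_mul_conjTranspose_pow (A : Matrix (Fin N) (Fin N) ℂ) (p : ℕ) :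
    trace ((dproj A * (dproj A)ᴴ) ^ p) = (∑ i, (‖A i i‖ ^ 2) ^ p : ℝ) := by
  rw [dproj_eq_diagonal, diagonal_conjTranspose, diagonal_mul_diagonal, diagonal_pow,
    trace_diagonal]
  push_cast
  exact Finset.sum_congr rfl fun i _ => congrArg (· ^ p) (RCLike.mul_conj (A i i))

lemma norm_trace_dproj_mul_conjTranspose_pow_succ_le {A : Matrix (Fin N) (Fin N) ℂ} {r : ℝ}
    (hA : ‖A‖ ≤ r) (p : ℕ) :
    ‖trace ((dproj A * (dproj A)ᴴ) ^ (p + 1))‖ ≤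
      (r ^ 2) ^ p * RCLike.re (trace (dproj A * (dproj A)ᴴ)) := by
  have htrace := trace_dproj_mul_conjTranspose_pow A 1
  simp only [pow_one] at htrace
  rw [trace_dproj_mul_conjTranspose_pow, htrace, Complex.norm_of_nonneg (by positivity),
    RCLike.re_to_complex, Complex.ofReal_re, Finset.mul_sum]
  refine Finset.sum_le_sum fun i _ => ?_
  rw [pow_succ]
  gcongr
  exact (norm_entry_le_l2_opNorm A i i).trans hA

lemma norm_integral_trace_dproj_mul_conjTranspose_pow_succ_le {Ω : Type*} [MeasurableSpace Ω]
    {μ : Measure Ω} {A : Ω → Matrix (Fin N) (Fin N) ℂ} {r : ℝ}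
    (hint : Integrable (fun ω => trace (dproj (A ω) * (dproj (A ω))ᴴ)) μ)
    (hA : ∀ᵐ ω ∂μ, ‖A ω‖ ≤ r) (p : ℕ) :
    ‖∫ ω, trace ((dproj (A ω) * (dproj (A ω))ᴴ) ^ (p + 1)) ∂μ‖ ≤
      (r ^ 2) ^ p * ‖∫ ω, trace (dproj (A ω) * (dproj (A ω))ᴴ) ∂μ‖ := by
  refine (norm_integral_le_of_norm_le (hint.re.const_mul ((r ^ 2) ^ p)) (hA.mono fun ω hω =>
    norm_trace_dproj_mul_conjTranspose_pow_succ_le hω p)).trans ?_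
  rw [integral_const_mul, integral_re hint]
  gcongr
  exact RCLike.re_le_norm _

end DiagonalProjection

section SecondMoment

open scoped Matrix.Norms.L2Operator

variable {Ω K κ : Type} [MeasurableSpace Ω] {μ : Measure Ω} [IsProbabilityMeasure μ] {n d N : ℕ}
  [NeZero n] {A : κ → K → Ω → Matrix (Fin N) (Fin N) ℂ} {ℓv : Fin n → κ} {dv : Fin n → ℕ}
  {kv : Fin n → ℕ → K} {D : Fin n → ℕ → Matrix (Fin N) (Fin N) ℂ} {C C' : ℝ}

lemma integrable_prod_wordMatrix (hmeas : ∀ ℓ k, EntriesMeasurable (A ℓ k)) (hC : 1 ≤ C)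
    (hA : ∀ᵐ ω ∂μ, ∀ i j, ∀ a ∈ paddedLetter (dv i) (kv i) j, ‖A (ℓv i) a ω‖ ≤ C) (m : ℕ)
    (f : ℕ → Fin N) :
    Integrable (fun ω => ∏ k ∈ Finset.range m,
      wordMatrix d dv kv k (fun a => A (cyclicWalk ℓv (k / d)) a ω) (f k) (f (k + 1))) μ :=
  integrable_prod_entries (fun k => aestronglyMeasurable_wordMatrix hmeas k _)
    (hA.mono fun _ hω _ => norm_wordMatrix_le hC (hω _ _)) _ _

lemma integrable_trace_centeredMonomialDiag (hmeas : ∀ ℓ k, EntriesMeasurable (A ℓ k)) (hC : 1 ≤ C)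
    (hA : ∀ᵐ ω ∂μ, ∀ i j, ∀ a ∈ paddedLetter (dv i) (kv i) j, ‖A (ℓv i) a ω‖ ≤ C)
    (hDdiag : ∀ i j, (D i j).IsDiag) (hdv : ∀ i, dv i ≤ d) :
    Integrable (fun ω => trace (centeredMonomialDiag (fun ℓ k => A ℓ k ω) ℓv dv kv D *
      (centeredMonomialDiag (fun ℓ k => A ℓ k ω) ℓv dv kv D)ᴴ)) μ := by
  simp only [centeredMonomialDiag, conjTranspose_dproj]
  have : NeZero (2 * (n * (d + 1))) := ⟨by simp [NeZero.ne n]⟩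
  exact integrable_trace_of_isPathSum
    (fun ω => isPathSum_centeredMonomialDiag_mul_map_star (fun ℓ k => A ℓ k ω) hDdiag hdv)
    LocalTo.centeredMonomialWeight.mul_star_comp_add_left
    (integrable_prod_wordMatrix hmeas hC hA _)

lemma norm_integral_trace_centeredMonomialDiag_le [Finite κ]
    (hmeas : ∀ ℓ k, EntriesMeasurable (A ℓ k)) (hindep : iIndep (fun ℓ => famSigma (A ℓ)) μ)
    (hperm : ∀ ℓ, PermInvariant μ (A ℓ)) (hC : 1 ≤ C)
    (hA : ∀ᵐ ω ∂μ, ∀ i j, ∀ a ∈ paddedLetter (dv i) (kv i) j, ‖A (ℓv i) a ω‖ ≤ C)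
    (hℓ : ∀ (i : ℕ) (h : i + 1 < n), ℓv ⟨i, Nat.lt_of_succ_lt h⟩ ≠ ℓv ⟨i + 1, h⟩)
    (hDdiag : ∀ i j, (D i j).IsDiag) (hC' : 1 ≤ C') (hD : ∀ i j, ‖D i j‖ ≤ C')
    (hdv : ∀ i, dv i ≤ d) {m : ℕ} (hm : m = 2 * (n * (d + 1))) (hN : 2 * (3 + 2 * m) ≤ N) :
    ‖∫ ω, trace (centeredMonomialDiag (fun ℓ k => A ℓ k ω) ℓv dv kv D *
      (centeredMonomialDiag (fun ℓ k => A ℓ k ω) ℓv dv kv D)ᴴ) ∂μ‖ ≤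
      ((C' ^ (d + 1)) ^ n) ^ 2 * (C ^ m * 2 ^ ((3 + 2 * m) ^ 2 + (3 + 2 * m))) * m.factorial := by
  subst hm
  simp only [centeredMonomialDiag, conjTranspose_dproj]
  have : NeZero (2 * (n * (d + 1))) := ⟨by simp [NeZero.ne n]⟩
  refine norm_integral_trace_le_of_isPathSum
    (fun ω => isPathSum_centeredMonomialDiag_mul_map_star (fun ℓ k => A ℓ k ω) hDdiag hdv)
    LocalTo.centeredMonomialWeight.mul_star_comp_add_left
    (integrable_prod_wordMatrix hmeas hC hA _) (by positivity) (fun f => ?_) (by positivity)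
    fun f hf hwf => ?_
  · rw [norm_mul, norm_star, sq]
    have hw := norm_centeredMonomialWeight_le (dv := dv) hC' hD (d + 1)
    exact mul_le_mul (hw f) (hw _) (norm_nonneg _) (by positivity)
  · obtain ⟨hclosed, hcent⟩ :=
      eq_and_forall_ne_of_centeredWeight_ne_zero (left_ne_zero_of_mul hwf)
    rw [Fintype.card_fin]
    exact norm_integral_prod_wordMatrix_mul_pow_le hmeas hindep hperm d.succ_pos hC hA hℓ hf
      hclosed hcent hN

end SecondMoment

section HigherMoments

open scoped Matrix.Norms.L2Operator

variable {Ω K κ : Type} [MeasurableSpace Ω] {μ : Measure Ω} {n d N : ℕ} {ℓv : Fin n → κ}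
  {dv : Fin n → ℕ} {kv : Fin n → ℕ → K} {D : Fin n → ℕ → Matrix (Fin N) (Fin N) ℂ} {C C' : ℝ}

lemma norm_centeredProd_monomialEval_le {A : κ → K → Matrix (Fin N) (Fin N) ℂ} (hC : 1 ≤ C)
    (hA : ∀ i j, ∀ a ∈ paddedLetter (dv i) (kv i) j, ‖A (ℓv i) a‖ ≤ C)
    (hDdiag : ∀ i j, (D i j).IsDiag) (hC' : 1 ≤ C') (hD : ∀ i j, ‖D i j‖ ≤ C')
    (hdv : ∀ i, dv i ≤ d) :
    ‖centeredProd fun i => monomialEval (A (ℓv i)) (dv i) (kv i) (D i)‖ ≤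
      (2 * (C' * C) ^ (d + 1)) ^ n :=
  norm_centeredProd_le fun i => norm_monomialEval_le hC hC' (hDdiag i) (hD i) (hdv i) (hA i)

variable {A : κ → K → Ω → Matrix (Fin N) (Fin N) ℂ}

lemma ae_forall_paddedLetter_norm_le (hA : ∀ ℓ k, ∀ᵐ ω ∂μ, ‖A ℓ k ω‖ ≤ C) (ℓv : Fin n → κ)
    (dv : Fin n → ℕ) (kv : Fin n → ℕ → K) :
    ∀ᵐ ω ∂μ, ∀ i j, ∀ a ∈ paddedLetter (dv i) (kv i) j, ‖A (ℓv i) a ω‖ ≤ C := by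
  refine ae_all_iff.2 fun i => ae_all_iff.2 fun j => ?_
  cases paddedLetter (dv i) (kv i) j with
  | none => simp
  | some a => simpa using hA (ℓv i) a

lemma norm_integral_trace_centeredMonomialDiag_pow_succ_le [IsProbabilityMeasure μ] [NeZero n]
    [Finite κ] (hmeas : ∀ ℓ k, EntriesMeasurable (A ℓ k))
    (hindep : iIndep (fun ℓ => famSigma (A ℓ)) μ) (hperm : ∀ ℓ, PermInvariant μ (A ℓ))
    (hC : 1 ≤ C) (hA : ∀ ℓ k, ∀ᵐ ω ∂μ, ‖A ℓ k ω‖ ≤ C)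
    (hℓ : ∀ (i : ℕ) (h : i + 1 < n), ℓv ⟨i, Nat.lt_of_succ_lt h⟩ ≠ ℓv ⟨i + 1, h⟩)
    (hDdiag : ∀ i j, (D i j).IsDiag) (hC' : 1 ≤ C') (hD : ∀ i j, ‖D i j‖ ≤ C')
    (hdv : ∀ i, dv i ≤ d) {m : ℕ} (hm : m = 2 * (n * (d + 1))) (hN : 2 * (3 + 2 * m) ≤ N) (p : ℕ) :
    ‖∫ ω, trace ((centeredMonomialDiag (fun ℓ k => A ℓ k ω) ℓv dv kv D *
      (centeredMonomialDiag (fun ℓ k => A ℓ k ω) ℓv dv kv D)ᴴ) ^ (p + 1)) ∂μ‖ ≤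
      (((2 * (C' * C) ^ (d + 1)) ^ n) ^ 2) ^ p *
        (((C' ^ (d + 1)) ^ n) ^ 2 * (C ^ m * 2 ^ ((3 + 2 * m) ^ 2 + (3 + 2 * m))) *
          m.factorial) := by
  have hletters := ae_forall_paddedLetter_norm_le hA ℓv dv kv
  have hint := integrable_trace_centeredMonomialDiag hmeas hC hletters hDdiag hdv
  have hnorm := hletters.mono fun ω h =>
    norm_centeredProd_monomialEval_le (A := fun ℓ k => A ℓ k ω) hC h hDdiag hC' hD hdv
  exact (norm_integral_trace_dproj_mul_conjTranspose_pow_succ_le hint hnorm p).trans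
    (mul_le_mul_of_nonneg_left (norm_integral_trace_centeredMonomialDiag_le hmeas hindep hperm hC
      hletters hℓ hDdiag hC' hD hdv hm hN) (by positivity))

end HigherMoments

theorem asymptotically_free_amalg_diagonal_expectation_general {Ω K : Type} [MeasurableSpace Ω]
    {μ : Measure Ω} [IsProbabilityMeasure μ] {L : ℕ}
    {A : (N : ℕ) → Fin L → K → Ω → Matrix (Fin N) (Fin N) ℂ}
    (hmeas : ∀ N ℓ k, EntriesMeasurable (A N ℓ k)) (hop : UnifOpNormBound μ A)
    (hindep : IndepFamilies μ A) (hperm : ∀ N ℓ, PermInvariant μ (A N ℓ))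
    {n : ℕ} [NeZero n] {ℓv : Fin n → Fin L}
    (hℓ : ∀ (i : ℕ) (h : i + 1 < n), ℓv ⟨i, Nat.lt_of_succ_lt h⟩ ≠ ℓv ⟨i + 1, h⟩)
    {dv : ℕ → Fin n → ℕ} (kv : ℕ → Fin n → ℕ → K)
    {D : (N : ℕ) → Fin n → ℕ → Matrix (Fin N) (Fin N) ℂ} (hDdiag : ∀ N i j, (D N i j).IsDiag)
    {d : ℕ} (hdv : ∀ N i, dv N i ≤ d) {C' : ℝ} (hD : ∀ N i j, matOpNorm (D N i j) ≤ C')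
    (p : ℕ) :
    (fun N : ℕ => ∫ ω, (N : ℂ)⁻¹ * trace
      ((centeredMonomialDiag (fun ℓ k => A N ℓ k ω) ℓv (dv N) (kv N) (D N) *
        (centeredMonomialDiag (fun ℓ k => A N ℓ k ω) ℓv (dv N) (kv N) (D N))ᴴ) ^ (p + 1)) ∂μ)
      =O[atTop] fun N : ℕ => (N : ℝ)⁻¹ := by
  obtain ⟨C, hA⟩ := hop
  have hbound N hN := norm_integral_trace_centeredMonomialDiag_pow_succ_le (hmeas N) (hindep N)
    (hperm N) (le_max_left 1 C) (fun ℓ k => (hA N ℓ k).mono fun _ h => h.trans (le_max_right 1 C))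
    hℓ (kv := kv N) (hDdiag N) (le_max_left 1 C') (fun i j => (hD N i j).trans (le_max_right 1 C'))
    (hdv N) rfl hN p
  have hinv : (fun N : ℕ => (N : ℂ)⁻¹) =O[atTop] fun N : ℕ => (N : ℝ)⁻¹ :=
    .of_norm_le fun N => by rw [norm_inv, RCLike.norm_natCast]
  simp only [integral_const_mul]
  simpa only [mul_one] using! hinv.mul ((isBoundedUnder_of_eventually_le
    ((eventually_ge_atTop _).mono hbound)).isBigO_one ℝ)

/-- Theorem 1.2, convergence in expectation.
Independent, permutation invariant families of random matrices, uniformly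
bounded in operator norm, are asymptotically free with amalgamation over the
diagonal, in expectation: for monomials `P_{N,i}` with uniformly bounded
deterministic diagonal coefficients and uniformly bounded degrees, setting
`M_{N,i} = P_{N,i}(A_{N,ℓ_i})` and
`ε_N = Δ[(M_{N,1} - ΔM_{N,1}) ⋯ (M_{N,n} - ΔM_{N,n})]`, one has
`E[(1/N) Tr((ε_N ε_N^*)^p)] → 0` for every `p ≥ 1`. -/
theorem asymptotically_free_amalg_diagonal_expectation
    {Ω : Type} [MeasurableSpace Ω] (μ : Measure Ω) [IsProbabilityMeasure μ]
    {K : Type} [Nonempty K] [Finite K] {L : ℕ} (hL : 1 ≤ L)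
    (A : (N : ℕ) → Fin L → K → Ω → Matrix (Fin N) (Fin N) ℂ)
    (hmeas : ∀ N ℓ k, EntriesMeasurable (A N ℓ k))
    (hop : UnifOpNormBound μ A)
    (hindep : IndepFamilies μ A)
    (hperm : ∀ (N : ℕ) (ℓ : Fin L), PermInvariant μ (A N ℓ))
    (n : ℕ) (hn : 2 ≤ n) (ℓv : Fin n → Fin L)
    (hadj : ∀ (i : ℕ) (h1 : i + 1 < n),
      ℓv ⟨i, Nat.lt_of_succ_lt h1⟩ ≠ ℓv ⟨i + 1, h1⟩)
    (dv : ℕ → Fin n → ℕ) (kv : ℕ → Fin n → ℕ → K)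
    (D : (N : ℕ) → Fin n → ℕ → Matrix (Fin N) (Fin N) ℂ)
    (hdiag : ∀ N i j, (D N i j).IsDiag)
    (dmax : ℕ) (hdeg : ∀ N i, dv N i ≤ dmax)
    (C' : ℝ) (hDbdd : ∀ N i j, matOpNorm (D N i j) ≤ C')
    (p : ℕ) (hp : 1 ≤ p) :
    Filter.Tendsto
      (fun N : ℕ => ∫ ω,
        (N : ℂ)⁻¹ *
          (fun ε : Matrix (Fin N) (Fin N) ℂ => Matrix.trace ((ε * εᴴ) ^ p))
            (dproj (centeredProd fun i : Fin n =>
              monomialEval (fun k => A N (ℓv i) k ω) (dv N i) (kv N i) (D N i))) ∂μ)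
      atTop (nhds 0) := by
  obtain ⟨q, rfl⟩ := Nat.exists_eq_add_of_le' hp
  have : NeZero n := ⟨by omega⟩
  exact (asymptotically_free_amalg_diagonal_expectation_general hmeas hop hindep hperm hadj kv hdiag
    hdeg hDbdd q).trans_tendsto tendsto_inv_atTop_nhds_zero_nat
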